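/- arXiv:2302.13588 — 2 statements merged into one kernel-verified Lean document; each statement's English description precedes it below -/
import Mathlib

section
/- Let Ω ∈ k[x₁,x₂,x₃] be a nonzero homogeneous polynomial of degree 3, and equip P = k[x₁,x₂,x₃] with the unimodular (Jacobian) Poisson bracket determined by {x₁,x₂} = ∂Ω/∂x₃, {x₂,x₃} = ∂Ω/∂x₁, {x₃,x₁} = ∂Ω/∂x₂. Let G be a finite subgroup of the graded Poisson automorphism group of P. Then the invariant subalgebra P^G is isomorphic to P as a Poisson algebra if and only if G is trivial. -/
open MvPolynomial

/-- The bracket on `k[x₁,x₂,x₃]` determined by the values `p12 = {x₁,x₂}`, `p23 = {x₂,x₃}`,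
`p31 = {x₃,x₁}` via `{f,g} = Σ_{i<j} (∂f/∂xᵢ·∂g/∂xⱼ − ∂f/∂xⱼ·∂g/∂xᵢ)·{xᵢ,xⱼ}`. -/
noncomputable def jacBracket {k : Type*} [Field k] (p12 p23 p31 : MvPolynomial (Fin 3) k)
    (f g : MvPolynomial (Fin 3) k) : MvPolynomial (Fin 3) k :=
  (pderiv 0 f * pderiv 1 g - pderiv 1 f * pderiv 0 g) * p12 +
    (pderiv 1 f * pderiv 2 g - pderiv 2 f * pderiv 1 g) * p23 +
    (pderiv 2 f * pderiv 0 g - pderiv 0 f * pderiv 2 g) * p31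

/-- A graded Poisson automorphism: an algebra automorphism preserving the degree-one
component and the Poisson bracket. -/
def IsGradedPoissonAut {k : Type*} [Field k]
    (br : MvPolynomial (Fin 3) k → MvPolynomial (Fin 3) k → MvPolynomial (Fin 3) k)
    (φ : MvPolynomial (Fin 3) k ≃ₐ[k] MvPolynomial (Fin 3) k) : Prop :=
  (∀ i, (φ (X i)).IsHomogeneous 1) ∧ ∀ f g, φ (br f g) = br (φ f) (φ g)

/-- A Poisson reflection: a graded Poisson automorphism of finite order whose restriction to
the degree-one part (as a matrix) has eigenvalues `1, 1, ξ` for some root of unity `ξ ≠ 1`. -/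
def IsPoissonReflection {k : Type*} [Field k]
    (br : MvPolynomial (Fin 3) k → MvPolynomial (Fin 3) k → MvPolynomial (Fin 3) k)
    (φ : MvPolynomial (Fin 3) k ≃ₐ[k] MvPolynomial (Fin 3) k) : Prop :=
  IsGradedPoissonAut br φ ∧ (∃ n, 0 < n ∧ φ ^ n = 1) ∧
    ∃ M : Matrix (Fin 3) (Fin 3) k, (∀ i, φ (X i) = ∑ j, C (M i j) * X j) ∧
      ∃ ξ : k, ξ ≠ 1 ∧ (∃ m, 0 < m ∧ ξ ^ m = 1) ∧
        M.charpoly = (Polynomial.X - 1) ^ 2 * (Polynomial.X - Polynomial.C ξ)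

/-- `P^G ≅ P` as Poisson algebras: there is an injective algebra map `e : P → P` preserving
the bracket whose range is the invariant subalgebra `P^G`. -/
def InvariantsPoissonIso {k : Type*} [Field k]
    (br : MvPolynomial (Fin 3) k → MvPolynomial (Fin 3) k → MvPolynomial (Fin 3) k)
    (G : Subgroup (MvPolynomial (Fin 3) k ≃ₐ[k] MvPolynomial (Fin 3) k)) : Prop :=
  ∃ e : MvPolynomial (Fin 3) k →ₐ[k] MvPolynomial (Fin 3) k,
    Function.Injective e ∧
    Set.range e = {f : MvPolynomial (Fin 3) k | ∀ φ ∈ G, φ f = f} ∧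
    ∀ f g, e (br f g) = br (e f) (e g)

/-!
If `P^G ≅ P`, composing with the inclusion gives a Poisson endomorphism `e` with image `P^G`.
Compatibility with the bracket says `∂ⱼ(e Ω) = J · ∂ⱼ Ω`, where `J` is the Jacobian determinant of
`e`. If `J` has nonzero constant term, then the linear parts of the `e xᵢ` span the linear forms;
they are fixed by `G`, so `G` is trivial.

Otherwise every prime factor `q` of `Ω` divides `J`: the extension `P^G ⊆ P` ramifies along `q = 0`,
so `G` contains a reflection with root `q`, and `Ω` is a semi-invariant of it. In particular `Ω` is
a product of three linear forms, and up to a linear change of coordinates it is `c x³`,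
`xy(αx + βy)` or `xyz`. Each case is refuted by restricting `e` to the plane `x = 0` and, in the
last two, comparing the restrictions order by order along the line `x = y = 0`: the reflections and
the Poisson relations force so many of them to vanish that `e` would contract the plane, although
`e` is finite.
-/

section Derivations

lemma derivation_eq_zero_of_eval_eq_zero {A R M : Type*} [CommRing A] [CommRing R] [IsDomain R]
    [CharZero R] [Algebra A R] [AddCommGroup M] [Module R M] [Module A M]
    [Module.IsTorsionFree R M] (D : Derivation A R M) {x : R} (p : Polynomial A)
    (hp : p.map (algebraMap A R) ≠ 0) (hx : Polynomial.aeval x p = 0) : D x = 0 := by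
  induction hn : (p.map (algebraMap A R)).natDegree generalizing p with
  | zero =>
    rw [Polynomial.aeval_def, ← Polynomial.eval_map, Polynomial.eq_C_of_natDegree_eq_zero hn,
      Polynomial.eval_C] at hx
    rw [Polynomial.eq_C_of_natDegree_eq_zero hn, hx, map_zero] at hp
    exact absurd rfl hp
  | succ n ih =>
    have hD : Polynomial.aeval x p.derivative • D x = 0 := by rw [← D.map_aeval, hx, map_zero]
    refine (smul_eq_zero.1 hD).elim (fun hx' => ih p.derivative ?_ hx' ?_) id <;>
      rw [← Polynomial.derivative_map]
    · rw [Ne, Polynomial.derivative_eq_zero]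
      omega
    · rw [Polynomial.natDegree_derivative, hn, Nat.add_sub_cancel]

lemma derivation_algHom_apply_eq_zero {k σ B M : Type*} [CommRing k] [CommRing B] [Algebra k B]
    [AddCommGroup M] [Module k M] [Module B M] {f : MvPolynomial σ k →ₐ[k] B}
    (D : Derivation k B M) (hD : ∀ i, D (f (X i)) = 0) (p : MvPolynomial σ k) : D (f p) = 0 := by
  induction p using MvPolynomial.induction_on with
  | C a => rw [← algebraMap_eq, AlgHom.commutes, D.map_algebraMap]
  | add p q hp hq => rw [map_add, map_add, hp, hq, add_zero]
  | mul_X p i hp => rw [map_mul, D.leibniz, hp, hD, smul_zero, smul_zero, add_zero]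

theorem derivation_eq_zero_of_isIntegral {k σ R : Type*} [Field k] [CharZero k] [CommRing R]
    [IsDomain R] [Algebra k R] {f : MvPolynomial σ k →ₐ[k] R} (hf : f.toRingHom.IsIntegral)
    (δ : Derivation k R R) (hδ : ∀ i, δ (f (X i)) = 0) : δ = 0 := by
  have := charZero_of_injective_algebraMap (algebraMap k R).injective
  algebraize [f.toRingHom]
  let δ' : Derivation (MvPolynomial σ k) R R :=
    { toLinearMap := { δ.toLinearMap with
        map_smul' := fun p x => by
          change δ (f p * x) = f p * δ x
          rw [δ.leibniz, derivation_algHom_apply_eq_zero δ hδ, smul_zero, add_zero, smul_eq_mul] }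
      map_one_eq_zero' := δ.map_one_eq_zero
      leibniz' := δ.leibniz }
  ext x
  obtain ⟨p, hp, hpx⟩ := hf x
  exact derivation_eq_zero_of_eval_eq_zero δ' p (hp.map _).ne_zero hpx

end Derivations

section Jacobian

variable {R σ τ ι : Type*} [CommRing R]

lemma pderiv_algHom_apply [Fintype σ] (f : MvPolynomial σ R →ₐ[R] MvPolynomial τ R) (j : τ)
    (p : MvPolynomial σ R) :
    pderiv j (f p) = ∑ i, f (pderiv i p) * pderiv j (f (X i)) := by
  classical
  induction p using MvPolynomial.induction_on with
  | C a => simp [← algebraMap_eq]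
  | add p q hp hq => simp only [map_add, hp, hq, add_mul, Finset.sum_add_distrib]
  | mul_X p n hp =>
    simp only [map_mul, Derivation.leibniz, hp, smul_eq_mul, map_add, pderiv_X, add_mul,
      Finset.sum_add_distrib, Finset.mul_sum]
    congr 1
    · simp [Pi.single_apply, mul_ite, ite_mul]
    · exact Finset.sum_congr rfl fun i _ => by ring

lemma mkDerivation_apply_eq_sum [Fintype σ] {M : Type*} [AddCommGroup M] [Module R M]
    [Module (MvPolynomial σ R) M] [IsScalarTower R (MvPolynomial σ R) M] (u : σ → M)
    (p : MvPolynomial σ R) : mkDerivation R u p = ∑ j, pderiv j p • u j := by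
  classical
  induction p using MvPolynomial.induction_on with
  | C a => simp only [derivation_C, zero_smul, Finset.sum_const_zero]
  | add p q hp hq => simp only [map_add, hp, hq, add_smul, Finset.sum_add_distrib]
  | mul_X p i hp =>
    simp only [Derivation.leibniz, mkDerivation_X, hp, pderiv_X, Finset.smul_sum, add_smul,
      Finset.sum_add_distrib, smul_eq_mul, mul_smul]
    simp [Pi.single_apply]

/-- The Jacobian matrix `(∂fᵢ/∂xⱼ)` of a family of polynomials. -/
noncomputable def jacobianMatrix (f : ι → MvPolynomial σ R) : Matrix ι σ (MvPolynomial σ R) :=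
  Matrix.of fun i j => pderiv j (f i)

lemma jacobianMatrix_algHom_apply [Fintype σ] (φ : MvPolynomial σ R →ₐ[R] MvPolynomial σ R)
    (f : ι → MvPolynomial σ R) :
    jacobianMatrix (fun i => φ (f i)) =
      (jacobianMatrix f).map φ * jacobianMatrix fun i => φ (X i) := by
  ext1 i j
  simp only [jacobianMatrix, Matrix.mul_apply, Matrix.map_apply, Matrix.of_apply]
  exact pderiv_algHom_apply φ j (f i)

end Jacobian

section Homogeneous

variable {k σ : Type*} [Field k]

lemma homogeneousComponent_pderiv (d : ℕ) (j : σ) (p : MvPolynomial σ k) :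
    homogeneousComponent d (pderiv j p) = pderiv j (homogeneousComponent (d + 1) p) := by
  ext m
  simp [coeff_homogeneousComponent, coeff_pderiv, ite_mul]

attribute [local instance] MvPolynomial.gradedAlgebra in
lemma homogeneousComponent_mul_of_isHomogeneous {q : MvPolynomial σ k} {n : ℕ}
    (hq : q.IsHomogeneous n) (d : ℕ) (p : MvPolynomial σ k) :
    homogeneousComponent (d + n) (p * q) = homogeneousComponent d p * q := by
  rw [← decomposition.decompose'_apply, ← decomposition.decompose'_apply]
  exact DirectSum.coe_decompose_mul_add_of_right_mem (homogeneousSubmodule σ k) hq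

lemma totalDegree_pderiv_le (j : σ) (p : MvPolynomial σ k) :
    (pderiv j p).totalDegree ≤ p.totalDegree - 1 := by
  conv_lhs => rw [← sum_homogeneousComponent p, map_sum]
  refine totalDegree_finsetSum_le fun d hd => ?_
  refine (homogeneousComponent_isHomogeneous d p).pderiv.totalDegree_le.trans ?_
  exact Nat.sub_le_sub_right (Finset.mem_range_succ_iff.1 hd) 1

lemma totalDegree_eq_zero_of_pderiv_eq_zero [CharZero k] {p : MvPolynomial σ k}
    (h : ∀ j, pderiv j p = 0) : p.totalDegree = 0 := by
  classical
  rw [totalDegree_eq_zero_iff_eq_C]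
  ext m
  rw [coeff_C]
  split_ifs with hm
  · rw [hm]
  · obtain ⟨j, hj⟩ := Finsupp.ne_iff.1 (Ne.symm hm)
    have hle : Finsupp.single j 1 ≤ m :=
      Finsupp.single_le_iff.2 (Nat.one_le_iff_ne_zero.2 hj)
    have hcoeff := congrArg (coeff (m - Finsupp.single j 1)) (h j)
    rw [coeff_pderiv, tsub_add_cancel_of_le hle, coeff_zero] at hcoeff
    exact (mul_eq_zero.1 hcoeff).resolve_right (Nat.cast_add_one_ne_zero _)

lemma exists_not_dvd_pderiv_of_prime [CharZero k] {q : MvPolynomial σ k} (hq : Prime q) :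
    ∃ j, ¬ q ∣ pderiv j q := by
  by_contra! hdvd
  have hzero (j : σ) : pderiv j q = 0 := by
    by_contra hne
    have hle := totalDegree_le_of_dvd_of_isDomain (hdvd j) hne
    have hq0 : q.totalDegree = 0 := by have := totalDegree_pderiv_le j q; omega
    rw [totalDegree_eq_zero_iff_eq_C.1 hq0, pderiv_C] at hne
    exact hne rfl
  have hq0 := totalDegree_eq_zero_of_pderiv_eq_zero hzero
  exact hq.not_isUnit <| isUnit_iff_totalDegree_of_isReduced.2
    ⟨isUnit_iff_ne_zero.2 fun h0 => hq.ne_zero <| by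
      rw [totalDegree_eq_zero_iff_eq_C.1 hq0, h0, C_0], hq0⟩

lemma natCast_mul_mul_pderiv_of_pderiv_eq_mul [Finite σ] {Ω J F : MvPolynomial σ k}
    {n : ℕ} (hΩ : Ω.IsHomogeneous (n + 1)) (hF : ∀ j, pderiv j F = J * pderiv j Ω) (d : ℕ) (j : σ) :
    (d : MvPolynomial σ k) * homogeneousComponent d J * pderiv j Ω =
      (n + 1) * Ω * pderiv j (homogeneousComponent d J) := by
  have := Fintype.ofFinite σ
  have hΩ' (i : σ) : (pderiv i Ω).IsHomogeneous n := hΩ.pderiv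
  have hdF (i : σ) : pderiv i (homogeneousComponent (d + n + 1) F) =
      homogeneousComponent d J * pderiv i Ω := by
    rw [← homogeneousComponent_pderiv, hF, homogeneousComponent_mul_of_isHomogeneous (hΩ' i)]
  have hEuler : (d + n + 1) * homogeneousComponent (d + n + 1) F =
      (n + 1) * (homogeneousComponent d J * Ω) := by
    have hF' := (homogeneousComponent_isHomogeneous (d + n + 1) F).sum_X_mul_pderiv
    have hΩ'' := hΩ.sum_X_mul_pderiv
    simp only [hdF, mul_left_comm (X _) (homogeneousComponent d J), ← Finset.mul_sum, hΩ''] at hF'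
    simp only [nsmul_eq_mul] at hF'
    push_cast at hF'
    linear_combination -hF'
  have hderiv := congrArg (pderiv j) hEuler
  have hcast (m : ℕ) : pderiv j (m : MvPolynomial σ k) = 0 := (pderiv j).map_natCast m
  simp only [Derivation.leibniz, map_add, hcast, hdF, smul_eq_mul, Derivation.map_one_eq_zero]
    at hderiv
  linear_combination hderiv

/-- If `J dΩ` is exact, then `J_d` and `Ω` satisfy `d J_d dΩ = deg Ω · Ω dJ_d` degree by degree,
so `J_d ^ deg Ω` is a constant multiple of `Ω ^ d`. -/
theorem prime_dvd_of_pderiv_eq_mul [Finite σ] [CharZero k] {Ω J F q : MvPolynomial σ k} {n : ℕ}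
    (hΩ : Ω.IsHomogeneous (n + 1)) (hΩ0 : Ω ≠ 0) (hF : ∀ j, pderiv j F = J * pderiv j Ω)
    (hJ : constantCoeff J = 0) (hq : Prime q) (hqΩ : q ∣ Ω) : q ∣ J := by
  obtain ⟨j, hj⟩ := exists_not_dvd_pderiv_of_prime hq
  obtain ⟨w, hw, hqw⟩ := (FiniteMultiplicity.of_prime_left hq hΩ0).exists_eq_pow_mul_and_not_dvd
  obtain ⟨m, hm⟩ : ∃ m, multiplicity q Ω = m + 1 :=
    Nat.exists_eq_succ_of_ne_zero fun h0 => hqw <| by rwa [hw, h0, pow_zero, one_mul] at hqΩ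
  rw [hm] at hw
  rw [← sum_homogeneousComponent J]
  refine Finset.dvd_sum fun d _ => ?_
  obtain rfl | hd := eq_or_ne d 0
  · rw [homogeneousComponent_zero, ← constantCoeff_eq, hJ, C_0]
    exact dvd_zero q
  have hrel := natCast_mul_mul_pderiv_of_pderiv_eq_mul hΩ hF d j
  have hdvd : q ∣ C (d * (m + 1) : k) * (homogeneousComponent d J * (w * pderiv j q)) := by
    refine ⟨(n + 1) * w * pderiv j (homogeneousComponent d J) -
      d * homogeneousComponent d J * pderiv j w, ?_⟩
    apply mul_left_cancel₀ (pow_ne_zero m hq.ne_zero)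
    simp only [hw, Derivation.leibniz, Derivation.leibniz_pow, smul_eq_mul, nsmul_eq_mul,
      Nat.add_sub_cancel] at hrel
    simp only [map_mul, map_add, map_natCast, C_1]
    push_cast at hrel
    linear_combination hrel
  have hunit : IsUnit (C (d * (m + 1) : k) : MvPolynomial σ k) :=
    (isUnit_iff_ne_zero.2 <| mul_ne_zero (Nat.cast_ne_zero.2 hd) m.cast_add_one_ne_zero).map C
  refine (hq.dvd_or_dvd (hunit.dvd_mul_left.1 hdvd)).resolve_right fun h => ?_
  exact (hq.dvd_or_dvd h).elim hqw hj

end Homogeneous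

section LinearEndomorphisms

variable {k σ : Type*} [Field k]

lemma eq_sum_of_isHomogeneous_one [Fintype σ] {f : MvPolynomial σ k} (hf : f.IsHomogeneous 1) :
    f = ∑ j, C (constantCoeff (pderiv j f)) * X j := by
  conv_lhs => rw [← one_smul ℕ f, ← hf.sum_X_mul_pderiv]
  refine Finset.sum_congr rfl fun j _ => ?_
  have hj : (pderiv j f).IsHomogeneous 0 := hf.pderiv
  rw [mul_comm, constantCoeff_eq, ← totalDegree_eq_zero_iff_eq_C.1
    ((totalDegree_zero_iff_isHomogeneous σ).2 hj)]

lemma constantCoeff_algHom_apply {φ : MvPolynomial σ k →ₐ[k] MvPolynomial σ k}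
    (hφ : ∀ i, (φ (X i)).IsHomogeneous 1) (f : MvPolynomial σ k) :
    constantCoeff (φ f) = constantCoeff f := by
  have h : (constantCoeff.comp φ.toRingHom : MvPolynomial σ k →+* k) = constantCoeff := by
    refine ringHom_ext (fun a => ?_) fun i => ?_
    · simp [← algebraMap_eq]
    · simpa [constantCoeff_eq] using (hφ i).coeff_eq_zero (d := 0) (by simp)
  exact DFunLike.congr_fun h f

/-- The Jacobian determinant of an endomorphism of a polynomial ring. -/
noncomputable def jacobianDet [Fintype σ] [DecidableEq σ]
    (e : MvPolynomial σ k →ₐ[k] MvPolynomial σ k) : MvPolynomial σ k :=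
  (jacobianMatrix fun i => e (X i)).det

lemma jacobianDet_comp [Fintype σ] [DecidableEq σ]
    (φ e : MvPolynomial σ k →ₐ[k] MvPolynomial σ k) :
    jacobianDet (φ.comp e) = φ (jacobianDet e) * jacobianDet φ := by
  simp only [jacobianDet, AlgHom.comp_apply]
  rw [jacobianMatrix_algHom_apply, Matrix.det_mul, AlgHom.map_det]
  rfl

lemma jacobianDet_id [Fintype σ] [DecidableEq σ] :
    jacobianDet (AlgHom.id k (MvPolynomial σ k)) = 1 := by
  rw [jacobianDet, ← Matrix.det_one (n := σ)]
  congr 1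
  ext1 i j
  simp [jacobianMatrix, pderiv_X, Matrix.one_apply, Pi.single_apply]

lemma exists_jacobianDet_algEquiv_eq_C [Fintype σ] [DecidableEq σ]
    (ψ : MvPolynomial σ k ≃ₐ[k] MvPolynomial σ k) :
    ∃ c, c ≠ 0 ∧ jacobianDet (ψ : MvPolynomial σ k →ₐ[k] MvPolynomial σ k) = C c := by
  have h : ψ (jacobianDet (ψ.symm : MvPolynomial σ k →ₐ[k] MvPolynomial σ k)) *
      jacobianDet (ψ : MvPolynomial σ k →ₐ[k] MvPolynomial σ k) = 1 := by
    rw [← jacobianDet_id (k := k) (σ := σ), ← AlgEquiv.comp_symm ψ, jacobianDet_comp]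
    rfl
  obtain ⟨c, hc, hψ⟩ := isUnit_iff_eq_C_of_isReduced.1 (IsUnit.of_mul_eq_one_right _ h)
  exact ⟨c, hc.ne_zero, hψ⟩

lemma algHom_eq_id_of_constantCoeff_jacobianDet_ne_zero [Fintype σ] [DecidableEq σ]
    {e φ : MvPolynomial σ k →ₐ[k] MvPolynomial σ k} (he : constantCoeff (jacobianDet e) ≠ 0)
    (hφ : ∀ i, (φ (X i)).IsHomogeneous 1) (hφe : ∀ f, φ (e f) = e f) : φ = AlgHom.id k _ := by
  set D := (jacobianMatrix fun i => e (X i)).map constantCoeff with hD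
  set M := (jacobianMatrix fun i => φ (X i)).map constantCoeff with hM
  have hDunit : IsUnit D.det := by
    rwa [isUnit_iff_ne_zero, hD, ← RingHom.mapMatrix_apply, ← RingHom.map_det]
  have hDM : D * M = D * 1 := by
    have h := congrArg (fun A => A.map constantCoeff)
      (jacobianMatrix_algHom_apply φ fun i => e (X i))
    simp only [hφe, Matrix.map_mul, Matrix.map_map] at h
    have hcomp : (constantCoeff : MvPolynomial σ k → k) ∘ φ = constantCoeff :=
      funext (constantCoeff_algHom_apply hφ)
    rw [hcomp] at h
    rw [mul_one, ← h]
  have hM1 : M = 1 := ((Matrix.isUnit_iff_isUnit_det _).2 hDunit).mul_left_cancel hDM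
  refine algHom_ext fun i => ?_
  have hentry (j : σ) : constantCoeff (pderiv j (φ (X i))) = (1 : Matrix σ σ k) i j := by
    rw [← hM1, hM, Matrix.map_apply, jacobianMatrix, Matrix.of_apply]
  rw [eq_sum_of_isHomogeneous_one (hφ i)]
  simp [hentry, Matrix.one_apply]

theorem eq_zero_of_jacobianMatrix_mulVec_eq_zero [CharZero k] {τ : Type*} [Fintype τ]
    {f : MvPolynomial σ k →ₐ[k] MvPolynomial τ k} (hf : f.toRingHom.IsIntegral)
    {v : τ → MvPolynomial τ k} (hv : (jacobianMatrix fun i => f (X i)).mulVec v = 0) : v = 0 := by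
  have hδ : mkDerivation k v = 0 := by
    refine derivation_eq_zero_of_isIntegral hf _ fun i => ?_
    rw [mkDerivation_apply_eq_sum]
    exact congrFun hv i
  ext1 j
  rw [← mkDerivation_X k v j, hδ, Derivation.zero_apply, Pi.zero_apply]

end LinearEndomorphisms

section Bracket

variable {k : Type*} [Field k]

/-- The Jacobian Poisson bracket with potential `Ω`. -/
noncomputable abbrev jacobianBracket (Ω f g : MvPolynomial (Fin 3) k) : MvPolynomial (Fin 3) k :=
  jacBracket (pderiv 2 Ω) (pderiv 0 Ω) (pderiv 1 Ω) f g

/-- Endomorphisms of the polynomial ring compatible with the Jacobian bracket of `Ω`. -/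
def IsPoissonEnd (Ω : MvPolynomial (Fin 3) k)
    (e : MvPolynomial (Fin 3) k →ₐ[k] MvPolynomial (Fin 3) k) : Prop :=
  ∀ f g, e (jacobianBracket Ω f g) = jacobianBracket Ω (e f) (e g)

lemma jacobianBracket_eq_det (Ω f g : MvPolynomial (Fin 3) k) :
    jacobianBracket Ω f g = (jacobianMatrix ![f, g, Ω]).det := by
  simp only [jacobianBracket, jacBracket, jacobianMatrix, Matrix.det_fin_three, Matrix.of_apply,
    Matrix.cons_val]
  ring

lemma jacobianBracket_algHom_apply (ψ : MvPolynomial (Fin 3) k →ₐ[k] MvPolynomial (Fin 3) k)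
    (Ω f g : MvPolynomial (Fin 3) k) :
    jacobianBracket (ψ Ω) (ψ f) (ψ g) = ψ (jacobianBracket Ω f g) * jacobianDet ψ := by
  have hvec : ![ψ f, ψ g, ψ Ω] = fun i => ψ (![f, g, Ω] i) := by
    ext1 i; fin_cases i <;> rfl
  rw [jacobianBracket_eq_det, hvec, jacobianMatrix_algHom_apply, Matrix.det_mul,
    jacobianBracket_eq_det, AlgHom.map_det, jacobianDet]
  rfl

lemma pderiv_apply_eq_jacobianDet_mul {Ω : MvPolynomial (Fin 3) k}
    {e : MvPolynomial (Fin 3) k →ₐ[k] MvPolynomial (Fin 3) k} (he : IsPoissonEnd Ω e) (j : Fin 3) :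
    pderiv j (e Ω) = jacobianDet e * pderiv j Ω := by
  have h0 : e (pderiv 0 Ω) = jacobianBracket Ω (e (X 1)) (e (X 2)) := by
    rw [← he]; simp [jacBracket]
  have h1 : e (pderiv 1 Ω) = jacobianBracket Ω (e (X 2)) (e (X 0)) := by
    rw [← he]; simp [jacBracket]
  have h2 : e (pderiv 2 Ω) = jacobianBracket Ω (e (X 0)) (e (X 1)) := by
    rw [← he]; simp [jacBracket]
  rw [pderiv_algHom_apply, Fin.sum_univ_three, h0, h1, h2]
  simp only [jacBracket, jacobianDet, jacobianMatrix, Matrix.det_fin_three, Matrix.of_apply]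
  match j with
  | 0 => ring
  | 1 => ring
  | 2 => ring

end Bracket

section Reflections

/-- For each `b` the derivative at `b` of `∏ (Y - g b)`, whose coefficients are invariant, shows
that either `D b = 0` or some `g ≠ 1` fixes the class of `b`; so `B` is a finite union of subspaces,
one of which must be everything. -/
theorem exists_ne_one_algebraMap_smul_eq {k B R G : Type*} [Field k] [Infinite k] [CommRing B]
    [Algebra k B] [CommRing R] [IsDomain R] [Algebra k R] [Algebra B R] [IsScalarTower k B R]
    [Group G] [Finite G] [MulSemiringAction G B] [SMulCommClass G k B] {D : Derivation k B R}
    (hD : D ≠ 0) (hDG : ∀ b, (∀ g : G, g • b = b) → D b = 0) :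
    ∃ g : G, g ≠ 1 ∧ ∀ b, algebraMap B R (g • b) = algebraMap B R b := by
  classical
  have := Fintype.ofFinite G
  have hprod (b : B) :
      (∏ g ∈ Finset.univ.erase (1 : G), (algebraMap B R b - algebraMap B R (g • b))) * D b = 0 := by
    have hcoeff : D.mapCoeffs (MulSemiringAction.charpoly G b) = 0 := by
      ext n
      exact hDG _ fun g => MulSemiringAction.smul_coeff_charpoly b n g
    have hder := D.apply_eval_eq b (MulSemiringAction.charpoly G b)
    rw [hcoeff, MulSemiringAction.eval_charpoly, map_zero, map_zero, zero_add,
      MulSemiringAction.charpoly_eq, ← Finset.mul_prod_erase _ _ (Finset.mem_univ (1 : G)),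
      one_smul, Polynomial.derivative_mul] at hder
    simpa [Polynomial.eval_prod, Algebra.smul_def, map_prod] using hder.symm
  let W (g : G) : B →ₗ[k] R := if g = 1 then D.toLinearMap else
    (IsScalarTower.toAlgHom k B R).toLinearMap ∘ₗ (LinearMap.id - DistribSMul.toLinearMap k B g)
  have hcover : ⋃ g, (LinearMap.ker (W g) : Set B) = Set.univ := by
    refine Set.eq_univ_of_forall fun b => Set.mem_iUnion.2 ?_
    obtain hb | hb := mul_eq_zero.1 (hprod b)
    · obtain ⟨g, hg, hgb⟩ := Finset.prod_eq_zero_iff.1 hb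
      refine ⟨g, ?_⟩
      simpa [W, Finset.ne_of_mem_erase hg] using hgb
    · exact ⟨1, by simpa [W] using hb⟩
  obtain ⟨g, hg⟩ := Subspace.exists_eq_top_of_iUnion_eq_univ hcover
  have hWg (b : B) : W g b = 0 := LinearMap.mem_ker.1 (hg ▸ Submodule.mem_top)
  obtain rfl | hg1 := eq_or_ne g 1
  · exact absurd (Derivation.ext fun b => by simpa [W] using hWg b) hD
  · exact ⟨g, hg1, fun b => (sub_eq_zero.1 (by simpa [W, hg1] using hWg b)).symm⟩

variable {k σ : Type*} [Field k]

/-- `φ` acts on linear forms as a reflection with eigenvalue `ξ ≠ 1`, and its root (the linear form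
cutting out its fixed hyperplane) is `l`. -/
structure IsReflection (φ : MvPolynomial σ k →ₐ[k] MvPolynomial σ k) (l : MvPolynomial σ k)
    (ξ : k) : Prop where
  isHomogeneous : l.IsHomogeneous 1
  root_ne_zero : l ≠ 0
  apply_root : φ l = C ξ * l
  exists_apply_eq : ∀ f : MvPolynomial σ k, f.IsHomogeneous 1 → ∃ t, φ f = f + C t * l
  eigenvalue_ne_zero : ξ ≠ 0
  eigenvalue_ne_one : ξ ≠ 1

lemma exists_eq_C_mul_of_dvd_of_isHomogeneous_one {q f : MvPolynomial σ k} (hq : ¬ IsUnit q)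
    (hf : f.IsHomogeneous 1) (hqf : q ∣ f) : ∃ t, f = C t * q := by
  obtain ⟨g, rfl⟩ := hqf
  obtain hf0 | hf0 := eq_or_ne (q * g) 0
  · exact ⟨0, by rw [hf0, C_0, zero_mul]⟩
  have hq0 : q ≠ 0 := left_ne_zero_of_mul hf0
  have hdeg : q.totalDegree + g.totalDegree = 1 := by
    rw [← totalDegree_mul_of_isDomain hq0 (right_ne_zero_of_mul hf0), hf.totalDegree hf0]
  have hqdeg : q.totalDegree ≠ 0 := fun h => hq <| isUnit_iff_totalDegree_of_isReduced.2
    ⟨isUnit_iff_ne_zero.2 fun h0 => hq0 <| by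
      rw [totalDegree_eq_zero_iff_eq_C.1 h, h0, C_0], h⟩
  refine ⟨coeff 0 g, ?_⟩
  rw [← totalDegree_eq_zero_iff_eq_C.1 (by omega : g.totalDegree = 0), mul_comm]

lemma isHomogeneous_algHom_apply {φ : MvPolynomial σ k →ₐ[k] MvPolynomial σ k}
    (hφ : ∀ i, (φ (X i)).IsHomogeneous 1) {f : MvPolynomial σ k} {n : ℕ} (hf : f.IsHomogeneous n) :
    (φ f).IsHomogeneous n := by
  have h := hf.aeval (g := fun i => φ (X i)) (n := 1) hφ
  rwa [one_mul, ← Function.comp_def φ X, ← aeval_unique φ] at h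

lemma isReflection_of_dvd [CharZero k] {φ : MvPolynomial σ k ≃ₐ[k] MvPolynomial σ k}
    (hφ : ∀ i, (φ (X i)).IsHomogeneous 1) (hφ1 : φ ≠ 1) (hfin : IsOfFinOrder φ)
    {q : MvPolynomial σ k} (hq : Prime q) (hdvd : ∀ f, q ∣ φ f - f) :
    ∃ ξ, IsReflection (φ : MvPolynomial σ k →ₐ[k] MvPolynomial σ k) q ξ := by
  have hlin (f : MvPolynomial σ k) (hf : f.IsHomogeneous 1) : ∃ t, φ f = f + C t * q := by
    have hφf : (φ f).IsHomogeneous 1 :=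
      isHomogeneous_algHom_apply (φ := (φ : MvPolynomial σ k →ₐ[k] MvPolynomial σ k)) hφ hf
    obtain ⟨t, ht⟩ :=
      exists_eq_C_mul_of_dvd_of_isHomogeneous_one hq.not_isUnit (hφf.sub hf) (hdvd f)
    exact ⟨t, by rw [← ht, add_sub_cancel]⟩
  obtain ⟨i, hi⟩ : ∃ i, φ (X i) ≠ X i := by
    by_contra! h
    exact hφ1 (AlgEquiv.coe_toAlgHom_injective (algHom_ext h))
  obtain ⟨t, ht⟩ := hlin (X i) (isHomogeneous_X k i)
  have ht0 : t ≠ 0 := fun h0 => hi (by rw [ht, h0, C_0, zero_mul, add_zero])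
  have hq1 : q.IsHomogeneous 1 := by
    have h : q = C t⁻¹ * (φ (X i) - X i) := by
      rw [ht, add_sub_cancel_left, ← mul_assoc, ← C_mul, inv_mul_cancel₀ ht0, C_1, one_mul]
    rw [h]
    exact ((hφ i).sub (isHomogeneous_X k i)).C_mul _
  obtain ⟨s, hs⟩ := hlin q hq1
  refine ⟨1 + s, hq1, hq.ne_zero, ?_, hlin, fun h0 => hq.ne_zero ?_, fun h1 => ?_⟩
  · rw [AlgEquiv.coe_toAlgHom, hs, C_add, C_1, add_mul, one_mul]
  · rw [← map_eq_zero_iff φ φ.injective, hs, ← one_add_mul, ← C_1, ← C_add, h0, C_0, zero_mul]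
  · rw [add_eq_left.1 h1, C_0, zero_mul, add_zero] at hs
    have hpow (n : ℕ) : (φ ^ n) (X i) = X i + C (n * t) * q := by
      induction n with
      | zero => simp
      | succ n ih =>
        rw [pow_succ', AlgEquiv.mul_apply, ih, map_add, ht, map_mul, hs, ← algebraMap_eq,
          AlgEquiv.commutes]
        simp only [algebraMap_eq, Nat.cast_succ, C_mul, C_add, C_1, map_natCast]
        ring
    obtain ⟨n, hn, hn1⟩ := isOfFinOrder_iff_pow_eq_one.1 hfin
    have h := hpow n
    rw [hn1, AlgEquiv.one_apply, left_eq_add, mul_eq_zero, C_eq_zero] at h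
    exact h.elim (mul_ne_zero (Nat.cast_ne_zero.2 hn.ne') ht0) hq.ne_zero

theorem exists_isReflection_of_dvd_jacobianDet [CharZero k] [Fintype σ] [DecidableEq σ]
    {G : Subgroup (MvPolynomial σ k ≃ₐ[k] MvPolynomial σ k)} [Finite G]
    (hlin : ∀ φ ∈ G, ∀ i, (φ (X i)).IsHomogeneous 1)
    {e : MvPolynomial σ k →ₐ[k] MvPolynomial σ k} (he : {f | ∀ φ ∈ G, φ f = f} ⊆ Set.range e)
    {q : MvPolynomial σ k} (hq : Prime q) (hqe : q ∣ jacobianDet e) :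
    ∃ φ ∈ G, ∃ ξ, IsReflection (φ : MvPolynomial σ k →ₐ[k] MvPolynomial σ k) q ξ := by
  have : (Ideal.span {q}).IsPrime := (Ideal.span_singleton_prime hq.ne_zero).2 hq
  let π := Ideal.Quotient.mk (Ideal.span {q})
  have hdet : ((jacobianMatrix fun i => e (X i)).map π).det = 0 := by
    rw [← RingHom.mapMatrix_apply, ← RingHom.map_det]
    exact Ideal.Quotient.eq_zero_iff_mem.2 (Ideal.mem_span_singleton.2 hqe)
  obtain ⟨u, hu, hmul⟩ := Matrix.exists_mulVec_eq_zero_iff.2 hdet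
  let D : Derivation k (MvPolynomial σ k) (MvPolynomial σ k ⧸ Ideal.span {q}) := mkDerivation k u
  have hD : D ≠ 0 := fun h => hu <| funext fun j => by
    rw [← mkDerivation_X k u j]
    exact DFunLike.congr_fun h (X j)
  have hDe : ∀ p, D (e p) = 0 := derivation_algHom_apply_eq_zero D fun i => by
    rw [mkDerivation_apply_eq_sum]
    exact congrFun hmul i
  obtain ⟨⟨φ, hφ⟩, hφ1, hφq⟩ := exists_ne_one_algebraMap_smul_eq (G := G) hD fun b hb => by
    obtain ⟨p, rfl⟩ := he fun φ hφ => hb ⟨φ, hφ⟩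
    exact hDe p
  refine ⟨φ, hφ, isReflection_of_dvd (hlin φ hφ) (fun h => hφ1 (Subtype.ext h)) ?_ hq fun f => ?_⟩
  · exact Submonoid.isOfFinOrder_coe.2 (isOfFinOrder_of_finite (⟨φ, hφ⟩ : G))
  · exact Ideal.mem_span_singleton.1 (Ideal.Quotient.eq.1 (hφq f))

lemma isIntegral_of_invariants_subset_range {A B : Type*} [CommRing A] [CommRing B] [Algebra k A]
    [Algebra k B] (G : Subgroup (B ≃ₐ[k] B)) [Finite G] {e : A →ₐ[k] B}
    (he : {f | ∀ φ ∈ G, φ f = f} ⊆ Set.range e) : e.toRingHom.IsIntegral := by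
  algebraize [e.toRingHom]
  have : Algebra.IsInvariant A B G := ⟨fun f hf => he fun φ hφ => hf ⟨φ, hφ⟩⟩
  exact (Algebra.IsInvariant.isIntegral A B G).isIntegral

end Reflections

section SemiInvariants

variable {k σ : Type*} [Field k]

lemma IsReflection.jacobianDet_eq [Fintype σ] [DecidableEq σ]
    {φ : MvPolynomial σ k →ₐ[k] MvPolynomial σ k} {l : MvPolynomial σ k} {ξ : k}
    (h : IsReflection φ l ξ) : jacobianDet φ = C ξ := by
  choose t ht using fun i => h.exists_apply_eq (X i) (isHomogeneous_X k i)
  let a (j : σ) : k := constantCoeff (pderiv j l)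
  have hl : l = ∑ j, C (a j) * X j := eq_sum_of_isHomogeneous_one h.isHomogeneous
  have hdl (j : σ) : pderiv j l = C (a j) := by
    rw [hl]
    simp [pderiv_X, Pi.single_apply]
  have hφl : φ l = C (1 + ∑ j, a j * t j) * l := by
    conv_lhs => rw [hl]
    simp only [map_sum, map_mul, ← algebraMap_eq, AlgHom.commutes, ht]
    simp only [algebraMap_eq, mul_add, Finset.sum_add_distrib, ← hl, C_add, C_1, map_sum, C_mul,
      add_mul, one_mul, Finset.sum_mul, mul_assoc]
  have hξ : 1 + ∑ j, a j * t j = ξ :=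
    C_injective σ k (mul_right_cancel₀ h.root_ne_zero (hφl.symm.trans h.apply_root))
  let u (i : σ) : MvPolynomial σ k := C (t i)
  let v (j : σ) : MvPolynomial σ k := C (a j)
  have hmat : (jacobianMatrix fun i => φ (X i)) =
      1 + Matrix.replicateCol Unit u * Matrix.replicateRow Unit v := by
    ext1 i j
    simp [jacobianMatrix, ht, hdl, pderiv_X, Matrix.mul_apply, Matrix.one_apply, Pi.single_apply,
      u, v]
  rw [jacobianDet, hmat, Matrix.det_one_add_replicateCol_mul_replicateRow, ← hξ]
  simp [dotProduct, u, v]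

lemma eq_of_pderiv_eq [CharZero k] {f g : MvPolynomial σ k} (h : ∀ j, pderiv j f = pderiv j g)
    (h0 : constantCoeff f = constantCoeff g) : f = g := by
  have hC := totalDegree_eq_zero_iff_eq_C.1 <|
    totalDegree_eq_zero_of_pderiv_eq_zero (p := f - g) fun j => by rw [map_sub, h, sub_self]
  rw [← sub_eq_zero, hC, ← constantCoeff_eq, map_sub, h0, sub_self, C_0]

lemma IsReflection.apply_potential_eq [CharZero k] {Ω l : MvPolynomial (Fin 3) k} {ξ : k} {n : ℕ}
    {φ : MvPolynomial (Fin 3) k →ₐ[k] MvPolynomial (Fin 3) k} (h : IsReflection φ l ξ)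
    (hφ : ∀ i, (φ (X i)).IsHomogeneous 1) (hφΩ : IsPoissonEnd Ω φ) (hΩ : Ω.IsHomogeneous (n + 1)) :
    φ Ω = C ξ * Ω := by
  refine eq_of_pderiv_eq (fun j => ?_) ?_
  · rw [pderiv_apply_eq_jacobianDet_mul hφΩ, h.jacobianDet_eq, pderiv_C_mul]
  · have h0 : constantCoeff Ω = 0 := by
      rw [constantCoeff_eq, hΩ.coeff_eq_zero (by simp)]
    rw [constantCoeff_algHom_apply hφ, map_mul, h0, mul_zero]

lemma IsReflection.apply_apply_eq_of_apply_root_eq_zero {B : Type*} [CommRing B] [Algebra k B]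
    {φ : MvPolynomial σ k →ₐ[k] MvPolynomial σ k} {l : MvPolynomial σ k} {ξ : k}
    (h : IsReflection φ l ξ) {ρ : MvPolynomial σ k →ₐ[k] B} (hρ : ρ l = 0)
    (f : MvPolynomial σ k) : ρ (φ f) = ρ f := by
  have hcomp : ρ.comp φ = ρ := algHom_ext fun i => by
    obtain ⟨t, ht⟩ := h.exists_apply_eq (X i) (isHomogeneous_X k i)
    rw [AlgHom.comp_apply, ht, map_add, map_mul, hρ, mul_zero, add_zero]
  exact DFunLike.congr_fun hcomp f

/-- `l` is the root of a reflection that fixes the range of `e` and has `Ω` as a semi-invariant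
with the eigenvalue of `l`. -/
def IsMirror (Ω : MvPolynomial σ k) (e : MvPolynomial σ k →ₐ[k] MvPolynomial σ k)
    (l : MvPolynomial σ k) : Prop :=
  ∃ φ ξ, IsReflection φ l ξ ∧ (∀ f, φ (e f) = e f) ∧ φ Ω = C ξ * Ω

lemma IsMirror.isHomogeneous {Ω l : MvPolynomial σ k}
    {e : MvPolynomial σ k →ₐ[k] MvPolynomial σ k} (h : IsMirror Ω e l) : l.IsHomogeneous 1 :=
  let ⟨_, _, hφ, _⟩ := h
  hφ.isHomogeneous

lemma IsMirror.ne_zero {Ω l : MvPolynomial σ k} {e : MvPolynomial σ k →ₐ[k] MvPolynomial σ k}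
    (h : IsMirror Ω e l) : l ≠ 0 :=
  let ⟨_, _, hφ, _⟩ := h
  hφ.root_ne_zero

lemma isHomogeneous_multiset_prod {s : Multiset (MvPolynomial σ k)}
    (hs : ∀ f ∈ s, f.IsHomogeneous 1) : s.prod.IsHomogeneous s.card := by
  induction s using Multiset.induction with
  | empty => exact isHomogeneous_one σ k
  | cons f s ih =>
    rw [Multiset.prod_cons, Multiset.card_cons, add_comm]
    exact (hs f (Multiset.mem_cons_self f s)).mul
      (ih fun g hg => hs g (Multiset.mem_cons_of_mem hg))

lemma exists_prime_mul_mul_eq {Ω : MvPolynomial σ k} (hΩ : Ω.IsHomogeneous 3)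
    (hΩ0 : Ω ≠ 0) (h : ∀ q, Prime q → q ∣ Ω → q.IsHomogeneous 1) :
    ∃ a b c, Prime a ∧ Prime b ∧ Prime c ∧ Ω = a * (b * c) := by
  obtain ⟨s, hs, u, hu⟩ := UniqueFactorizationMonoid.exists_prime_factors Ω hΩ0
  have hs1 (q) (hq : q ∈ s) : q.IsHomogeneous 1 :=
    h q (hs q hq) ((Multiset.dvd_prod hq).trans (Dvd.intro _ hu))
  obtain ⟨c, -, hc⟩ := isUnit_iff_eq_C_of_isReduced.1 u.isUnit
  have hcard : s.card = 3 := by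
    refine IsHomogeneous.inj_right ?_ hΩ hΩ0
    rw [← hu, hc, mul_comm]
    exact (isHomogeneous_multiset_prod hs1).C_mul c
  obtain ⟨a, b, c, rfl⟩ := Multiset.card_eq_three.1 hcard
  simp only [Multiset.insert_eq_cons, Multiset.mem_cons, Multiset.mem_singleton, forall_eq_or_imp,
    forall_eq, Multiset.prod_cons, Multiset.prod_singleton] at hs hu
  refine ⟨a, b, c * u, hs.1, hs.2.1, ?_, by rw [← hu]; ring⟩
  exact (Associated.prime_iff (associated_mul_unit_right c _ u.isUnit)).1 hs.2.2

end SemiInvariants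

section Coordinates

variable {k σ : Type*} [Field k]

theorem exists_algEquiv_apply_X_eq [Finite σ] {l : σ → MvPolynomial σ k}
    (hl : ∀ i, (l i).IsHomogeneous 1) (hli : LinearIndependent k l) :
    ∃ ψ : MvPolynomial σ k ≃ₐ[k] MvPolynomial σ k,
      (∀ i, ψ (X i) = l i) ∧ ∀ i, (ψ (X i)).IsHomogeneous 1 ∧ (ψ.symm (X i)).IsHomogeneous 1 := by
  classical
  have := Fintype.ofFinite σ
  let M : Matrix σ σ k := Matrix.of fun i j => constantCoeff (pderiv j (l i))
  have hM (i : σ) : l i = M.toMvPolynomial i := by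
    rw [eq_sum_of_isHomogeneous_one (hl i)]
    simp [M, Matrix.toMvPolynomial, C_mul_X_eq_monomial]
  have hrows : LinearIndependent k M.row := by
    refine .of_comp (Fintype.linearCombination k (X : σ → MvPolynomial σ k)) ?_
    convert! hli using 1
    ext1 i
    rw [Function.comp_apply, Fintype.linearCombination_apply, hM]
    simp [Matrix.toMvPolynomial, smul_eq_C_mul, C_mul_X_eq_monomial]
  have hdet := (Matrix.isUnit_iff_isUnit_det M).1 (Matrix.linearIndependent_rows_iff_isUnit.1 hrows)
  let ψ := AlgEquiv.ofAlgHom (bind₁ M.toMvPolynomial) (bind₁ M⁻¹.toMvPolynomial)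
    (algHom_ext fun i => by
      simp [← Matrix.toMvPolynomial_mul, Matrix.nonsing_inv_mul M hdet])
    (algHom_ext fun i => by
      simp [← Matrix.toMvPolynomial_mul, Matrix.mul_nonsing_inv M hdet])
  have hψ (i : σ) : ψ (X i) = l i := by simp [ψ, hM]
  refine ⟨ψ, hψ, fun i => ⟨(hψ i).symm ▸ hl i, ?_⟩⟩
  simpa [ψ] using M⁻¹.toMvPolynomial_isHomogeneous i

lemma exists_algEquiv_apply_X_castLE_eq {m n : ℕ} (hmn : m ≤ n) {l : Fin m → MvPolynomial (Fin n) k}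
    (hl : ∀ i, (l i).IsHomogeneous 1) (hli : LinearIndependent k l) :
    ∃ ψ : MvPolynomial (Fin n) k ≃ₐ[k] MvPolynomial (Fin n) k,
      (∀ i, ψ (X (Fin.castLE hmn i)) = l i) ∧
        ∀ i, (ψ (X i)).IsHomogeneous 1 ∧ (ψ.symm (X i)).IsHomogeneous 1 := by
  induction hmn using Nat.decreasingInduction with
  | self => exact exists_algEquiv_apply_X_eq hl hli
  | of_succ m hm ih =>
    let V := homogeneousSubmodule (Fin n) k 1
    let v (i : Fin m) : V := ⟨l i, hl i⟩
    have hv : LinearIndependent k v := .of_comp V.subtype hli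
    have hV : Module.finrank k V = n := by
      rw [show V = _ from homogeneousSubmodule_one_eq_span_X,
        finrank_span_eq_card (linearIndependent_X (Fin n) k), Fintype.card_fin]
    obtain ⟨x, hx⟩ := exists_linearIndependent_snoc_of_lt_finrank hv (hm.trans_eq hV.symm)
    obtain ⟨ψ, hψ, hψ'⟩ := ih (l := fun i => (Fin.snoc v x : Fin (m + 1) → V) i)
      (fun i => ((Fin.snoc v x : Fin (m + 1) → V) i).2) (hx.map' V.subtype V.ker_subtype)
    refine ⟨ψ, fun i => ?_, hψ'⟩
    simpa [v] using hψ i.castSucc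

/-- The endomorphism `e` read in the coordinates given by `ψ`. -/
noncomputable def conjugate (ψ : MvPolynomial σ k ≃ₐ[k] MvPolynomial σ k)
    (e : MvPolynomial σ k →ₐ[k] MvPolynomial σ k) : MvPolynomial σ k →ₐ[k] MvPolynomial σ k :=
  (ψ.symm : MvPolynomial σ k →ₐ[k] MvPolynomial σ k).comp (e.comp ψ)

lemma apply_conjugate (ψ : MvPolynomial σ k ≃ₐ[k] MvPolynomial σ k)
    (e : MvPolynomial σ k →ₐ[k] MvPolynomial σ k) (f : MvPolynomial σ k) :
    ψ (conjugate ψ e f) = e (ψ f) := by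
  simp [conjugate]

lemma isIntegral_conjugate {ψ : MvPolynomial σ k ≃ₐ[k] MvPolynomial σ k}
    {e : MvPolynomial σ k →ₐ[k] MvPolynomial σ k} (he : e.toRingHom.IsIntegral) :
    (conjugate ψ e).toRingHom.IsIntegral :=
  RingHom.IsIntegral.trans _ _
    (RingHom.IsIntegral.trans _ _ (RingHom.isIntegral_of_surjective _ ψ.surjective) he)
    (RingHom.isIntegral_of_surjective _ ψ.symm.surjective)

lemma IsPoissonEnd.conjugate {ψ : MvPolynomial (Fin 3) k ≃ₐ[k] MvPolynomial (Fin 3) k}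
    {e : MvPolynomial (Fin 3) k →ₐ[k] MvPolynomial (Fin 3) k} {Ω : MvPolynomial (Fin 3) k}
    (he : IsPoissonEnd (ψ Ω) e) : IsPoissonEnd Ω (conjugate ψ e) := by
  obtain ⟨c, hc, hψ⟩ := exists_jacobianDet_algEquiv_eq_C ψ
  have hbr (f g) : jacobianBracket (ψ Ω) (ψ f) (ψ g) = ψ (jacobianBracket Ω f g) * C c := by
    have h := jacobianBracket_algHom_apply
      (ψ : MvPolynomial (Fin 3) k →ₐ[k] MvPolynomial (Fin 3) k) Ω f g
    rwa [hψ] at h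
  intro f g
  have h := he (ψ f) (ψ g)
  rw [← apply_conjugate, ← apply_conjugate, hbr, hbr, map_mul, ← apply_conjugate,
    ← algebraMap_eq, AlgHom.commutes] at h
  exact ψ.injective (mul_right_cancel₀ (C_ne_zero.2 hc) h)

lemma IsReflection.conjugate {ψ : MvPolynomial σ k ≃ₐ[k] MvPolynomial σ k}
    {φ : MvPolynomial σ k →ₐ[k] MvPolynomial σ k} {l : MvPolynomial σ k} {ξ : k}
    (hψ : ∀ i, (ψ (X i)).IsHomogeneous 1 ∧ (ψ.symm (X i)).IsHomogeneous 1)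
    (h : IsReflection φ (ψ l) ξ) : IsReflection (conjugate ψ φ) l ξ where
  isHomogeneous := by
    simpa using isHomogeneous_algHom_apply
      (φ := (ψ.symm : MvPolynomial σ k →ₐ[k] MvPolynomial σ k)) (fun i => (hψ i).2) h.isHomogeneous
  root_ne_zero := fun h0 => h.root_ne_zero (by rw [h0, map_zero])
  apply_root := ψ.injective <| by
    rw [apply_conjugate, h.apply_root, map_mul, ← algebraMap_eq, AlgEquiv.commutes]
  exists_apply_eq f hf := by
    obtain ⟨t, ht⟩ := h.exists_apply_eq (ψ f) <| isHomogeneous_algHom_apply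
      (φ := (ψ : MvPolynomial σ k →ₐ[k] MvPolynomial σ k)) (fun i => (hψ i).1) hf
    refine ⟨t, ψ.injective ?_⟩
    rw [apply_conjugate, ht, map_add, map_mul, ← algebraMap_eq, AlgEquiv.commutes]
  eigenvalue_ne_zero := h.eigenvalue_ne_zero
  eigenvalue_ne_one := h.eigenvalue_ne_one

lemma IsMirror.conjugate {ψ : MvPolynomial σ k ≃ₐ[k] MvPolynomial σ k}
    {e : MvPolynomial σ k →ₐ[k] MvPolynomial σ k} {Ω l : MvPolynomial σ k}
    (hψ : ∀ i, (ψ (X i)).IsHomogeneous 1 ∧ (ψ.symm (X i)).IsHomogeneous 1)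
    (h : IsMirror (ψ Ω) e (ψ l)) : IsMirror Ω (conjugate ψ e) l := by
  obtain ⟨φ, ξ, hφ, hφe, hφΩ⟩ := h
  refine ⟨_, ξ, hφ.conjugate hψ, fun f => ψ.injective ?_, ψ.injective ?_⟩
  · rw [apply_conjugate, apply_conjugate, hφe]
  · rw [apply_conjugate, hφΩ, map_mul, ← algebraMap_eq, AlgEquiv.commutes]

end Coordinates

section Restriction

variable {k : Type*} [Field k] {n : ℕ}

/-- Restriction of polynomials to the coordinate hyperplane `x₀ = 0`. -/
noncomputable def restrict (k : Type*) [Field k] (n : ℕ) :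
    MvPolynomial (Fin (n + 1)) k →ₐ[k] MvPolynomial (Fin n) k :=
  aeval (Fin.cons 0 X)

@[simp]
lemma restrict_X_zero : restrict k n (X 0) = 0 := by
  simp [restrict]

@[simp]
lemma restrict_X_succ (i : Fin n) : restrict k n (X i.succ) = X i := by
  simp [restrict]

lemma X_zero_dvd_sub_rename_restrict (f : MvPolynomial (Fin (n + 1)) k) :
    X 0 ∣ f - rename Fin.succ (restrict k n f) := by
  induction f using MvPolynomial.induction_on with
  | C a => simp [← algebraMap_eq]
  | add p q hp hq =>
    rw [map_add, map_add, add_sub_add_comm]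
    exact dvd_add hp hq
  | mul_X p i hp =>
    cases i using Fin.cases with
    | zero => simp
    | succ i => simpa [← sub_mul] using hp.mul_right (X i.succ)

lemma X_zero_dvd_iff_restrict_eq_zero {f : MvPolynomial (Fin (n + 1)) k} :
    X 0 ∣ f ↔ restrict k n f = 0 := by
  refine ⟨?_, fun h => ?_⟩
  · rintro ⟨g, rfl⟩
    rw [map_mul, restrict_X_zero, zero_mul]
  · simpa [h] using X_zero_dvd_sub_rename_restrict f

lemma isIntegral_restrict : (restrict k n).toRingHom.IsIntegral := by
  refine RingHom.isIntegral_of_surjective _ fun f => ⟨rename Fin.succ f, ?_⟩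
  have h : (restrict k n).comp (rename Fin.succ) = AlgHom.id k _ :=
    algHom_ext fun i => by simp
  exact DFunLike.congr_fun h f

lemma pderiv_restrict (i : Fin n) (f : MvPolynomial (Fin (n + 1)) k) :
    pderiv i (restrict k n f) = restrict k n (pderiv i.succ f) := by
  rw [pderiv_algHom_apply, Fin.sum_univ_succ]
  simp [pderiv_X, Pi.single_apply]

lemma eq_zero_of_forall_eq_X_zero_pow_mul {ι : Type*} {f : ι → MvPolynomial (Fin (n + 1)) k}
    (h0 : ∀ i, restrict k n (f i) = 0)
    (h : ∀ (m : ℕ) (g : ι → MvPolynomial (Fin (n + 1)) k),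
      (∀ i, f i = X 0 ^ (m + 1) * g i) → ∀ i, restrict k n (g i) = 0) : f = 0 := by
  have hdvd (m : ℕ) : ∀ i, X 0 ^ (m + 1) ∣ f i := by
    induction m with
    | zero => simpa [X_zero_dvd_iff_restrict_eq_zero] using h0
    | succ m ih =>
      intro i
      choose g hg using ih
      obtain ⟨g', hg'⟩ := X_zero_dvd_iff_restrict_eq_zero.2 (h m g hg i)
      exact ⟨g', by rw [hg, hg', pow_succ _ (m + 1), mul_assoc]⟩
  ext1 i
  by_contra hfi
  obtain ⟨m, hm⟩ := FiniteMultiplicity.of_prime_left (X_prime (i := (0 : Fin (n + 1)))) hfi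
  exact hm (hdvd m i)

end Restriction

section PlaneJacobian

variable {k : Type*} [Field k]

/-- The Jacobian determinant `∂(f, g)/∂(x₀, x₁)` of two polynomials in two variables. -/
noncomputable def planeJacobian (f g : MvPolynomial (Fin 2) k) : MvPolynomial (Fin 2) k :=
  pderiv 0 f * pderiv 1 g - pderiv 1 f * pderiv 0 g

@[simp]
lemma planeJacobian_self (f : MvPolynomial (Fin 2) k) : planeJacobian f f = 0 := by
  rw [planeJacobian, mul_comm, sub_self]

@[simp]
lemma planeJacobian_zero_left (f : MvPolynomial (Fin 2) k) : planeJacobian 0 f = 0 := by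
  simp [planeJacobian]

@[simp]
lemma planeJacobian_zero_right (f : MvPolynomial (Fin 2) k) : planeJacobian f 0 = 0 := by
  simp [planeJacobian]

lemma planeJacobian_swap (f g : MvPolynomial (Fin 2) k) :
    planeJacobian g f = -planeJacobian f g := by
  simp only [planeJacobian]
  ring

lemma restrict_jacobianBracket (w f g : MvPolynomial (Fin 3) k) :
    restrict k 2 (jacobianBracket (X 0 * w) f g) =
      restrict k 2 w * planeJacobian (restrict k 2 f) (restrict k 2 g) := by
  simp [jacBracket, planeJacobian, pderiv_restrict, pderiv_X, mul_comm]

lemma exists_planeJacobian_X_zero_pow_mul_eq (m : ℕ) (f g : MvPolynomial (Fin 2) k) :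
    ∃ r, planeJacobian f (X 0 ^ (m + 1) * g) = X 0 ^ m * r ∧
      restrict k 1 r = -((m + 1) * pderiv 0 (restrict k 1 f) * restrict k 1 g) := by
  refine ⟨pderiv 0 f * (X 0 * pderiv 1 g) -
    pderiv 1 f * (((m + 1 : ℕ) : MvPolynomial (Fin 2) k) * g + X 0 * pderiv 0 g), ?_, ?_⟩
  · simp [planeJacobian, pderiv_X, Derivation.leibniz_pow]
    ring
  · simp [pderiv_restrict]
    ring

variable {σ : Type*} [CharZero k]

lemma exists_planeJacobian_ne_zero_of_isIntegral {f : MvPolynomial σ k →ₐ[k] MvPolynomial (Fin 2) k}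
    (hf : f.toRingHom.IsIntegral) : ∃ i j, planeJacobian (f (X i)) (f (X j)) ≠ 0 := by
  by_contra! h
  have hzero (j : σ) (i : Fin 2) : pderiv i (f (X j)) = 0 := by
    have hv : ![-pderiv 1 (f (X j)), pderiv 0 (f (X j))] = 0 := by
      refine eq_zero_of_jacobianMatrix_mulVec_eq_zero hf (funext fun i => ?_)
      rw [Pi.zero_apply, ← h j i]
      simp only [jacobianMatrix, Matrix.mulVec, dotProduct, planeJacobian, Fin.sum_univ_two,
        Matrix.of_apply, Matrix.cons_val]
      ring
    match i with
    | 0 => exact congrFun hv 1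
    | 1 => exact neg_eq_zero.1 (congrFun hv 0)
  have hv := eq_zero_of_jacobianMatrix_mulVec_eq_zero hf (v := 1) <| by
    ext1 i
    simp [jacobianMatrix, Matrix.mulVec, dotProduct, hzero]
  exact one_ne_zero (congrFun hv 0)

lemma exists_pderiv_ne_zero_of_isIntegral {f : MvPolynomial σ k →ₐ[k] MvPolynomial (Fin 1) k}
    (hf : f.toRingHom.IsIntegral) : ∃ i, pderiv 0 (f (X i)) ≠ 0 := by
  by_contra! h
  have hv := eq_zero_of_jacobianMatrix_mulVec_eq_zero hf (v := 1) <| by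
    ext1 i
    simp [jacobianMatrix, Matrix.mulVec, dotProduct, h]
  exact one_ne_zero (congrFun hv 0)

end PlaneJacobian

section TriplePlane

variable {k : Type*} [Field k]
  {e : MvPolynomial (Fin 3) k →ₐ[k] MvPolynomial (Fin 3) k}

lemma IsPoissonEnd.restrict_apply {w : MvPolynomial (Fin 3) k} (he : IsPoissonEnd (X 0 * w) e)
    (f g : MvPolynomial (Fin 3) k) : restrict k 2 (e (jacobianBracket (X 0 * w) f g)) =
      restrict k 2 w * planeJacobian (restrict k 2 (e f)) (restrict k 2 (e g)) := by
  rw [he, restrict_jacobianBracket]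

lemma jacobianBracket_cube (c : k) (f g : MvPolynomial (Fin 3) k) :
    jacobianBracket (X 0 * (C c * X 0 ^ 2)) f g =
      C (3 * c) * X 0 ^ 2 * (pderiv 1 f * pderiv 2 g - pderiv 2 f * pderiv 1 g) := by
  simp only [jacBracket, Derivation.leibniz, Derivation.leibniz_pow, pderiv_C, pderiv_X_self,
    pderiv_X_of_ne (show (0 : Fin 3) ≠ 1 by decide), smul_eq_mul, C_mul, map_ofNat,
    pderiv_X_of_ne (show (0 : Fin 3) ≠ 2 by decide), nsmul_eq_mul]
  push_cast
  ring

lemma IsReflection.restrict_eq_zero_of_apply_X_zero_mul_eq {n : ℕ} {ξ : k}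
    {φ : MvPolynomial (Fin (n + 1)) k →ₐ[k] MvPolynomial (Fin (n + 1)) k}
    (hφ : IsReflection φ (X 0) ξ) {z : MvPolynomial (Fin (n + 1)) k} (hz : φ (X 0 * z) = X 0 * z) :
    restrict k n z = 0 := by
  rw [map_mul, hφ.apply_root, mul_comm (C ξ), mul_assoc] at hz
  have h := congrArg (restrict k n) (mul_left_cancel₀ (X_ne_zero 0) hz)
  rw [map_mul, hφ.apply_apply_eq_of_apply_root_eq_zero restrict_X_zero, ← algebraMap_eq,
    AlgHom.commutes, algebraMap_eq, ← sub_eq_zero, ← sub_one_mul, ← C_1, ← C_sub, mul_eq_zero,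
    C_eq_zero, sub_eq_zero] at h
  exact h.resolve_left hφ.eigenvalue_ne_one

theorem not_isMirror_of_potential_eq_cube [CharZero k] {c : k} (hc : c ≠ 0)
    (he : IsPoissonEnd (X 0 * (C c * X 0 ^ 2)) e) (hint : e.toRingHom.IsIntegral) :
    ¬ IsMirror (X 0 * (C c * X 0 ^ 2)) e (X 0) := by
  rintro ⟨φ, ξ, hφ, hφe, -⟩
  have hc3 : 3 * c ≠ 0 := mul_ne_zero three_ne_zero hc
  have h12 : C (3 * c) * e (X 0) ^ 2 = C (3 * c) * X 0 ^ 2 *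
      (pderiv 1 (e (X 1)) * pderiv 2 (e (X 2)) - pderiv 2 (e (X 1)) * pderiv 1 (e (X 2))) := by
    have h := he (X 1) (X 2)
    rw [jacobianBracket_cube, jacobianBracket_cube] at h
    simpa [← algebraMap_eq] using h
  have hy0 : restrict k 2 (e (X 0)) = 0 := by
    simpa [hc] using congrArg (restrict k 2) h12
  obtain ⟨z, hz⟩ := X_zero_dvd_iff_restrict_eq_zero.2 hy0
  have hz0 : restrict k 2 z = 0 :=
    hφ.restrict_eq_zero_of_apply_X_zero_mul_eq (hz ▸ hφe (X 0))
  have hy12 : planeJacobian (restrict k 2 (e (X 1))) (restrict k 2 (e (X 2))) = 0 := by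
    rw [hz, mul_pow, ← mul_assoc] at h12
    have hz2 := mul_left_cancel₀
      (mul_ne_zero (C_ne_zero.2 hc3) (pow_ne_zero 2 (X_ne_zero 0))) h12
    simpa [hz0, planeJacobian, pderiv_restrict] using (congrArg (restrict k 2) hz2).symm
  obtain ⟨i, j, hij⟩ := exists_planeJacobian_ne_zero_of_isIntegral
    (f := (restrict k 2).comp e) (RingHom.IsIntegral.trans _ _ hint isIntegral_restrict)
  refine hij ?_
  have hy21 : planeJacobian (restrict k 2 (e (X 2))) (restrict k 2 (e (X 1))) = 0 := by
    rw [planeJacobian_swap, hy12, neg_zero]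
  fin_cases i <;> fin_cases j <;> simp [hy0, hy12, hy21]

end TriplePlane

section CoordinatePlanes

variable {k : Type*} [Field k]

lemma coeff_X_mul_pderiv {σ : Type*} (i : σ) (f : MvPolynomial σ k) (n : σ →₀ ℕ) :
    coeff n (X i * pderiv i f) = n i * coeff n f := by
  classical
  rw [coeff_X_mul']
  split_ifs with hi
  · have hle : Finsupp.single i 1 ≤ n :=
      Finsupp.single_le_iff.2 (Nat.one_le_iff_ne_zero.2 (Finsupp.mem_support_iff.1 hi))
    have hni := Finsupp.single_le_iff.1 hle
    rw [coeff_pderiv, tsub_add_cancel_of_le hle, mul_comm, Finsupp.tsub_apply,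
      Finsupp.single_eq_same, ← Nat.cast_add_one, Nat.sub_add_cancel hni]
  · rw [Finsupp.notMem_support_iff.1 hi, Nat.cast_zero, zero_mul]

lemma isHomogeneous_one_of_eq_C_mul_X_mul_pderiv [CharZero k] {ε : k} (hε : ε ^ 2 = 1) {m : ℕ}
    {f : MvPolynomial (Fin 1) k} (h : f = C (ε * m) * (X 0 * pderiv 0 f)) :
    f.IsHomogeneous 1 := by
  intro n hn
  have hcoeff : 1 * coeff n f = ε * m * n 0 * coeff n f := by
    conv_lhs => rw [h]
    rw [one_mul, coeff_C_mul, coeff_X_mul_pderiv, mul_assoc (ε * m)]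
  have hsq : ((m * n 0 : ℕ) : k) ^ 2 = 1 := by
    rw [← one_mul (_ ^ 2), ← hε, ← mul_pow, Nat.cast_mul, ← mul_assoc,
      ← mul_right_cancel₀ hn hcoeff, one_pow, hε]
  have hn0 : n 0 = 1 := by
    have hmn : (m * n 0) ^ 2 = 1 := mod_cast hsq
    exact Nat.eq_one_of_mul_eq_one_left (by simpa using hmn)
  simp [Finsupp.weight_apply, Finsupp.sum_fintype, hn0]

lemma eq_zero_of_mul_eq_planeJacobian [CharZero k] {ε ξ : k} (hε : ε ^ 2 = 1) (hξ : ξ ≠ 1)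
    {f g : MvPolynomial (Fin 2) k} (h : f * g = C ε * (X 0 * X 1 * planeJacobian f g))
    (hf : restrict k 1 f ≠ 0)
    (hfξ : aeval (fun _ => C ξ * X 0) (restrict k 1 f) = restrict k 1 f) : g = 0 := by
  have hg : restrict k 1 g = 0 :=
    (mul_eq_zero.1 (by simpa using congrArg (restrict k 1) h)).resolve_left hf
  refine congrFun (eq_zero_of_forall_eq_X_zero_pow_mul (f := fun _ : Unit => g) (fun _ => hg)
    fun m g' hg' _ => ?_) ()
  obtain ⟨r, hr, hr'⟩ := exists_planeJacobian_X_zero_pow_mul_eq m f (g' ())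
  have hcancel : f * g' () = C ε * (X 1 * r) := by
    rw [hg' (), hr] at h
    refine mul_left_cancel₀ (pow_ne_zero (m + 1) (X_ne_zero (0 : Fin 2))) ?_
    linear_combination h
  by_contra hg0
  have hode : restrict k 1 f =
      C (-ε * (m + 1 : ℕ)) * (X 0 * pderiv 0 (restrict k 1 f)) := by
    refine mul_right_cancel₀ hg0 ?_
    have h1 : restrict k 1 (X 1) = X 0 := restrict_X_succ 0
    have hC : restrict k 1 (C ε) = C ε := (restrict k 1).commutes ε
    rw [← map_mul, hcancel, map_mul, map_mul, h1, hC, hr']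
    simp only [C_mul, C_neg, map_natCast]
    push_cast
    ring
  obtain ⟨a, ha⟩ : ∃ a, restrict k 1 f = C a * X 0 := by
    refine ⟨_, (eq_sum_of_isHomogeneous_one
      (isHomogeneous_one_of_eq_C_mul_X_mul_pderiv ?_ hode)).trans (Fin.sum_univ_one _)⟩
    rw [neg_sq, hε]
  have hscale : C ξ * restrict k 1 f = C 1 * restrict k 1 f := by
    rw [C_1, one_mul]
    conv_rhs => rw [← hfξ]
    rw [ha, map_mul, aeval_X, ← algebraMap_eq, AlgHom.commutes, mul_left_comm]
  exact hξ (C_injective _ k (mul_right_cancel₀ hf hscale))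

lemma IsReflection.apply_X_eq_of_apply_X_mul_X_mul_X_eq {ξ : k}
    {φ : MvPolynomial (Fin 3) k →ₐ[k] MvPolynomial (Fin 3) k} (h : IsReflection φ (X 2) ξ)
    (hφ : φ (X 0 * (X 1 * X 2)) = C ξ * (X 0 * (X 1 * X 2))) :
    φ (X 0) = X 0 ∧ φ (X 1) = X 1 := by
  obtain ⟨a, ha⟩ := h.exists_apply_eq (X 0) (isHomogeneous_X k 0)
  obtain ⟨b, hb⟩ := h.exists_apply_eq (X 1) (isHomogeneous_X k 1)
  have hmul : (X 0 + C a * X 2) * (X 1 + C b * X 2) = (X 0 * X 1 : MvPolynomial (Fin 3) k) := by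
    rw [map_mul, map_mul, ha, hb, h.apply_root] at hφ
    refine mul_left_cancel₀ (mul_ne_zero (C_ne_zero.2 h.eigenvalue_ne_zero) h.root_ne_zero) ?_
    linear_combination hφ
  have heval (x : Fin 3 → k) : (x 0 + a * x 2) * (x 1 + b * x 2) = x 0 * x 1 := by
    simpa using congrArg (eval x) hmul
  have hab : a * b = 0 := by simpa using heval ![0, 0, 1]
  have ha0 : a = 0 := by simpa [mul_add, hab] using heval ![0, 1, 1]
  have hb0 : b = 0 := by simpa [add_mul, hab] using heval ![1, 0, 1]
  exact ⟨by simp [ha, ha0], by simp [hb, hb0]⟩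

lemma exists_jacobianBracket_X_X_eq {i j : Fin 3} (hij : i ≠ j) :
    ∃ ε : k, ε ^ 2 = 1 ∧
      jacobianBracket (X 0 * (X 1 * X 2)) (X i) (X j) = C ε * (X i * X j) := by
  have hcases : j = i + 1 ∨ i = j + 1 := by omega
  have hnext (i : Fin 3) : jacobianBracket (X 0 * (X 1 * X 2)) (X i) (X (i + 1)) =
      (X i * X (i + 1) : MvPolynomial (Fin 3) k) := by
    fin_cases i <;> simp [jacBracket, pderiv_X, mul_comm]
  rcases hcases with rfl | rfl
  · exact ⟨1, one_pow 2, by rw [hnext, C_1, one_mul]⟩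
  · refine ⟨-1, neg_one_sq, ?_⟩
    rw [C_neg, C_1, neg_one_mul, mul_comm (X (j + 1)), ← hnext]
    simp only [jacobianBracket, jacBracket]
    ring

lemma IsPoissonEnd.exists_mul_eq_planeJacobian
    {e : MvPolynomial (Fin 3) k →ₐ[k] MvPolynomial (Fin 3) k}
    (he : IsPoissonEnd (X 0 * (X 1 * X 2)) e) {i j : Fin 3} (hij : i ≠ j) :
    ∃ ε : k, ε ^ 2 = 1 ∧ restrict k 2 (e (X i)) * restrict k 2 (e (X j)) =
      C ε * (X 0 * X 1 * planeJacobian (restrict k 2 (e (X i))) (restrict k 2 (e (X j)))) := by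
  obtain ⟨ε, hε, hbr⟩ := exists_jacobianBracket_X_X_eq (k := k) hij
  have h := he.restrict_apply (X i) (X j)
  have h1 : restrict k 2 (X 1) = X 0 := restrict_X_succ 0
  have h2 : restrict k 2 (X 2) = X 1 := restrict_X_succ 1
  rw [hbr, ← algebraMap_eq, map_mul, AlgHom.commutes, map_mul, AlgHom.commutes, map_mul, map_mul,
    map_mul, h1, h2, algebraMap_eq] at h
  have hεC : (C ε ^ 2 : MvPolynomial (Fin 2) k) = 1 := by rw [← C_pow, hε, C_1]
  refine ⟨ε, hε, ?_⟩
  linear_combination C ε * h - hεC * restrict k 2 (e (X i)) * restrict k 2 (e (X j))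

lemma IsReflection.aeval_restrict_restrict_eq {ξ : k}
    {φ : MvPolynomial (Fin 3) k →ₐ[k] MvPolynomial (Fin 3) k} (h : IsReflection φ (X 2) ξ)
    (hφ : φ (X 0 * (X 1 * X 2)) = C ξ * (X 0 * (X 1 * X 2))) (f : MvPolynomial (Fin 3) k) :
    aeval (fun _ => C ξ * X 0) (restrict k 1 (restrict k 2 f)) =
      restrict k 1 (restrict k 2 (φ f)) := by
  obtain ⟨hφ0, hφ1⟩ := h.apply_X_eq_of_apply_X_mul_X_mul_X_eq hφ
  have h1 : restrict k 2 (X 1) = X 0 := restrict_X_succ 0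
  have h2 : restrict k 1 (restrict k 2 (X 2)) = X 0 :=
    (congrArg _ (restrict_X_succ 1)).trans (restrict_X_succ 0)
  have hcomp : (aeval fun _ => C ξ * X 0).comp ((restrict k 1).comp (restrict k 2)) =
      ((restrict k 1).comp (restrict k 2)).comp φ := by
    ext1 i
    fin_cases i
    · simp [hφ0]
    · simp [hφ1, h1]
    · simp [h.apply_root, h2, ← algebraMap_eq]
  exact DFunLike.congr_fun hcomp f

theorem not_isMirror_of_potential_eq_X_mul_X_mul_X [CharZero k]
    {e : MvPolynomial (Fin 3) k →ₐ[k] MvPolynomial (Fin 3) k}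
    (he : IsPoissonEnd (X 0 * (X 1 * X 2)) e) (hint : e.toRingHom.IsIntegral) :
    ¬ IsMirror (X 0 * (X 1 * X 2)) e (X 2) := by
  rintro ⟨φ, ξ, hφ, hφe, hφΩ⟩
  have hscale (f) : aeval (fun _ => C ξ * X 0) (restrict k 1 (restrict k 2 (e f))) =
      restrict k 1 (restrict k 2 (e f)) := by
    rw [hφ.aeval_restrict_restrict_eq hφΩ, hφe]
  have hint2 : ((restrict k 2).comp e).toRingHom.IsIntegral :=
    RingHom.IsIntegral.trans _ _ hint isIntegral_restrict
  obtain ⟨i, hi⟩ := exists_pderiv_ne_zero_of_isIntegral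
    (f := (restrict k 1).comp ((restrict k 2).comp e))
    (RingHom.IsIntegral.trans _ _ hint2 isIntegral_restrict)
  have hzero {j} (hj : j ≠ i) : restrict k 2 (e (X j)) = 0 := by
    obtain ⟨ε, hε, hij⟩ := he.exists_mul_eq_planeJacobian hj.symm
    exact eq_zero_of_mul_eq_planeJacobian hε hφ.eigenvalue_ne_one hij
      (fun h0 => hi (by simp [h0])) (hscale (X i))
  obtain ⟨j, l, hjl⟩ := exists_planeJacobian_ne_zero_of_isIntegral hint2
  refine hjl ?_
  simp only [AlgHom.comp_apply]
  by_cases hj : j = i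
  · by_cases hl : l = i
    · rw [hj, hl, planeJacobian_self]
    · rw [hzero hl, planeJacobian_zero_right]
  · rw [hzero hj, planeJacobian_zero_left]

end CoordinatePlanes

section ConcurrentPlanes

variable {k : Type*} [Field k]

lemma IsReflection.apply_pderiv_eq_sum {σ B : Type*} [Fintype σ] [CommRing B] [Algebra k B]
    {φ : MvPolynomial σ k →ₐ[k] MvPolynomial σ k} {i : σ} {ξ : k} (h : IsReflection φ (X i) ξ)
    {ρ : MvPolynomial σ k →ₐ[k] B} (hρ : ρ (X i) = 0) {f : MvPolynomial σ k} (hf : φ f = f) :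
    ρ (pderiv i f) = ∑ j, ρ (pderiv j f) * ρ (pderiv i (φ (X j))) := by
  conv_lhs => rw [← hf, pderiv_algHom_apply, map_sum]
  exact Finset.sum_congr rfl fun j _ => by
    rw [map_mul, h.apply_apply_eq_of_apply_root_eq_zero hρ]

lemma IsReflection.exists_apply_X_eq_of_apply_eq {σ : Type*} {i j : σ} (hij : i ≠ j) {α β ξ : k}
    (hα : α ≠ 0) {φ : MvPolynomial σ k →ₐ[k] MvPolynomial σ k} (h : IsReflection φ (X i) ξ)
    (hφ : φ (X i * (X j * (C α * X i + C β * X j))) =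
      C ξ * (X i * (X j * (C α * X i + C β * X j)))) :
    ∃ d, φ (X j) = X j + C d * X i ∧ ξ = -1 ∧ β * d = α := by
  classical
  obtain ⟨d, hd⟩ := h.exists_apply_eq (X j) (isHomogeneous_X k j)
  have hcancel : (X j + C d * X i) * (C α * (C ξ * X i) + C β * (X j + C d * X i)) =
      X j * (C α * X i + C β * X j) := by
    have hC (a : k) : φ (C a) = C a := φ.commutes a
    rw [map_mul, map_mul, map_add, map_mul, map_mul, hC, hC, hd, h.apply_root] at hφ
    refine mul_left_cancel₀ (mul_ne_zero (C_ne_zero.2 h.eigenvalue_ne_zero) h.root_ne_zero) ?_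
    linear_combination hφ
  have heval (s : k) : (s + d) * (α * ξ + β * (s + d)) = s * (α + β * s) := by
    simpa [hij.symm] using congrArg (eval fun l => if l = i then 1 else s) hcancel
  have h0 : d * (α * ξ + β * d) = 0 := by simpa using heval 0
  have h1 : α * ξ + 2 * β * d = α := by linear_combination heval 1 - h0
  have hd0 : d ≠ 0 := by
    rintro rfl
    exact h.eigenvalue_ne_one (mul_left_cancel₀ hα (by linear_combination h1))
  have hξ : α * ξ + β * d = 0 := (mul_eq_zero.1 h0).resolve_left hd0
  exact ⟨d, hd, mul_left_cancel₀ hα (by linear_combination 2 * hξ - h1),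
    by linear_combination h1 - hξ⟩

lemma eq_zero_of_X_sq_mul_planeJacobian_mem [CharZero k] {ι : Type*}
    {y : ι → MvPolynomial (Fin 2) k} {z : MvPolynomial (Fin 2) k}
    (hz : pderiv 0 (restrict k 1 z) ≠ 0)
    (h : ∀ i, X 0 ^ 2 * planeJacobian z (y i) ∈ Ideal.span (Set.range y) ^ 2)
    (hy : ∀ i, restrict k 1 (y i) = 0) (hy' : ∀ i, restrict k 1 (pderiv 0 (y i)) = 0) :
    y = 0 := by
  refine eq_zero_of_forall_eq_X_zero_pow_mul hy fun m g hg i => ?_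
  cases m with
  | zero => simpa [hg, pderiv_X] using hy' i
  | succ m =>
    obtain ⟨r, hr, hr'⟩ := exists_planeJacobian_X_zero_pow_mul_eq (m + 1) z (g i)
    have hspan : Ideal.span (Set.range y) ≤ Ideal.span {X 0 ^ (m + 2)} :=
      Ideal.span_le.2 (Set.range_subset_iff.2 fun j =>
        Ideal.mem_span_singleton.2 ⟨g j, hg j⟩)
    have hdvd : X 0 ^ (m + 3) * X 0 ^ (m + 1) ∣ X 0 ^ (m + 3) * r := by
      have hmem := Ideal.pow_right_mono hspan 2 (h i)
      rw [Ideal.span_singleton_pow, Ideal.mem_span_singleton, hg, hr] at hmem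
      obtain ⟨q, hq⟩ := hmem
      exact ⟨q, by linear_combination hq⟩
    have hr0 : restrict k 1 r = 0 := X_zero_dvd_iff_restrict_eq_zero.1 <|
      (dvd_pow_self _ m.succ_ne_zero).trans
        ((mul_dvd_mul_iff_left (pow_ne_zero _ (X_ne_zero 0))).1 hdvd)
    rw [hr', neg_eq_zero, mul_eq_zero] at hr0
    exact hr0.resolve_left (mul_ne_zero (by exact_mod_cast (m + 1).succ_ne_zero) hz)

lemma IsReflection.restrict_pderiv_restrict_eq_zero [CharZero k] {d d' : k} (hdd' : d * d' = 1)
    {φ φ' : MvPolynomial (Fin 3) k →ₐ[k] MvPolynomial (Fin 3) k}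
    (h : IsReflection φ (X 0) (-1)) (hφ : φ (X 1) = X 1 + C d * X 0)
    (h' : IsReflection φ' (X 1) (-1)) (hφ' : φ' (X 0) = X 0 + C d' * X 1)
    {f : MvPolynomial (Fin 3) k} (hf : φ f = f) (hf' : φ' f = f)
    (hf0 : restrict k 1 (restrict k 2 f) = 0) :
    restrict k 1 (pderiv 0 (restrict k 2 f)) = 0 := by
  let lin := (restrict k 1).comp (restrict k 2)
  have hlin1 : lin (X 1) = 0 :=
    (congrArg (restrict k 1) (restrict_X_succ (0 : Fin 2))).trans restrict_X_zero
  have hlinC (a : k) : lin (C a) = C a := lin.commutes a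
  have h2 : lin (pderiv 2 f) = 0 := by
    have h2' := congrArg (pderiv 0) hf0
    rwa [pderiv_restrict, pderiv_restrict, map_zero] at h2'
  obtain ⟨t, ht⟩ := h.exists_apply_eq (X 2) (isHomogeneous_X k 2)
  obtain ⟨t', ht'⟩ := h'.exists_apply_eq (X 2) (isHomogeneous_X k 2)
  have hsum0 : lin (pderiv 0 f) = -lin (pderiv 0 f) + lin (pderiv 1 f) * C d := by
    simpa [Fin.sum_univ_three, h.apply_root, hφ, ht, h2, pderiv_X, hlinC] using
      h.apply_pderiv_eq_sum (ρ := lin) (by simp [lin]) hf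
  have hsum1 : lin (pderiv 1 f) = lin (pderiv 0 f) * C d' + -lin (pderiv 1 f) := by
    simpa [Fin.sum_univ_three, h'.apply_root, hφ', ht', h2, pderiv_X, hlinC] using
      h'.apply_pderiv_eq_sum (ρ := lin) hlin1 hf'
  have hddC : C d * C d' = (1 : MvPolynomial (Fin 1) k) := by rw [← C_mul, hdd', C_1]
  have h1 : 3 * lin (pderiv 1 f) = 0 := by
    linear_combination 2 * hsum1 + C d' * hsum0 + lin (pderiv 1 f) * hddC
  rw [pderiv_restrict]
  exact (mul_eq_zero.1 h1).resolve_left (by norm_num)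

lemma IsPoissonEnd.X_sq_mul_planeJacobian_eq {α β : k}
    {e : MvPolynomial (Fin 3) k →ₐ[k] MvPolynomial (Fin 3) k}
    (he : IsPoissonEnd (X 0 * (X 1 * (C α * X 0 + C β * X 1))) e) :
    C β * (X 0 ^ 2 * planeJacobian (restrict k 2 (e (X 2))) (restrict k 2 (e (X 0)))) =
        restrict k 2 (e (X 0)) *
          (C α * restrict k 2 (e (X 0)) + C (2 * β) * restrict k 2 (e (X 1))) ∧
      C β * (X 0 ^ 2 * planeJacobian (restrict k 2 (e (X 2))) (restrict k 2 (e (X 1)))) =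
        -(restrict k 2 (e (X 1)) *
          (C (2 * α) * restrict k 2 (e (X 0)) + C β * restrict k 2 (e (X 1)))) := by
  have h20 : jacobianBracket (X 0 * (X 1 * (C α * X 0 + C β * X 1))) (X 2) (X 0) =
      X 0 * (C α * X 0 + C (2 * β) * X 1) := by
    simp only [jacBracket, Derivation.leibniz, map_add, pderiv_C, pderiv_X, Pi.single_apply, C_mul,
      map_ofNat, smul_eq_mul]
    simp
    ring
  have h21 : jacobianBracket (X 0 * (X 1 * (C α * X 0 + C β * X 1))) (X 2) (X 1) =
      -(X 1 * (C (2 * α) * X 0 + C β * X 1)) := by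
    simp only [jacBracket, Derivation.leibniz, map_add, pderiv_C, pderiv_X, Pi.single_apply, C_mul,
      map_ofNat, smul_eq_mul]
    simp
    ring
  have h1 : restrict k 2 (X 1) = X 0 := restrict_X_succ 0
  have hr0 := he.restrict_apply (X 2) (X 0)
  have hr1 := he.restrict_apply (X 2) (X 1)
  have hC (a : k) : restrict k 2 (C a) = C a := (restrict k 2).commutes a
  have heC (a : k) : e (C a) = C a := e.commutes a
  simp only [h20, h21, map_mul, map_neg, map_add, hC, heC, h1, restrict_X_zero] at hr0 hr1 ⊢
  constructor
  · linear_combination -hr0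
  · linear_combination -hr1

lemma IsPoissonEnd.X_sq_mul_planeJacobian_mem {α β : k} (hβ : β ≠ 0)
    {e : MvPolynomial (Fin 3) k →ₐ[k] MvPolynomial (Fin 3) k}
    (he : IsPoissonEnd (X 0 * (X 1 * (C α * X 0 + C β * X 1))) e) (i : Fin 2) :
    X 0 ^ 2 * planeJacobian (restrict k 2 (e (X 2))) (restrict k 2 (e (X i.castSucc))) ∈
      Ideal.span (Set.range fun i : Fin 2 => restrict k 2 (e (X i.castSucc))) ^ 2 := by
  set I := Ideal.span (Set.range fun i : Fin 2 => restrict k 2 (e (X i.castSucc)))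
  have hI (i : Fin 2) : restrict k 2 (e (X i.castSucc)) ∈ I :=
    Ideal.subset_span (Set.mem_range_self i)
  have hmem (i : Fin 2) (a b : k) : restrict k 2 (e (X i.castSucc)) *
      (C a * restrict k 2 (e (X 0)) + C b * restrict k 2 (e (X 1))) ∈ I ^ 2 := by
    rw [sq]
    exact Ideal.mul_mem_mul (hI i)
      (I.add_mem (I.mul_mem_left _ (hI 0)) (I.mul_mem_left _ (hI 1)))
  have hunit : IsUnit (C β : MvPolynomial (Fin 2) k) := (isUnit_iff_ne_zero.2 hβ).map C
  rw [← Ideal.unit_mul_mem_iff_mem _ hunit]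
  match i with
  | 0 => exact he.X_sq_mul_planeJacobian_eq.1 ▸ hmem 0 α (2 * β)
  | 1 => exact he.X_sq_mul_planeJacobian_eq.2 ▸ neg_mem (hmem 1 (2 * α) β)

lemma IsPoissonEnd.restrict_restrict_eq_zero [CharZero k] {α β : k} (hα : α ≠ 0) (hβ : β ≠ 0)
    {e : MvPolynomial (Fin 3) k →ₐ[k] MvPolynomial (Fin 3) k}
    (he : IsPoissonEnd (X 0 * (X 1 * (C α * X 0 + C β * X 1))) e) :
    restrict k 1 (restrict k 2 (e (X 0))) = 0 ∧ restrict k 1 (restrict k 2 (e (X 1))) = 0 := by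
  have hC (a : k) : restrict k 1 (C a) = C a := (restrict k 1).commutes a
  have hα' : (C α : MvPolynomial (Fin 1) k) ≠ 0 := C_ne_zero.2 hα
  have hβ' : (C β : MvPolynomial (Fin 1) k) ≠ 0 := C_ne_zero.2 hβ
  have h0 := congrArg (restrict k 1) he.X_sq_mul_planeJacobian_eq.1
  have h1 := congrArg (restrict k 1) he.X_sq_mul_planeJacobian_eq.2
  simp only [map_mul, map_add, map_neg, map_pow, restrict_X_zero, hC, ne_eq,
    OfNat.ofNat_ne_zero, not_false_eq_true, zero_pow, zero_mul, mul_zero, zero_eq_mul,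
    zero_eq_neg, mul_eq_zero, map_ofNat] at h0 h1
  rcases h0 with h0 | h0 <;> rcases h1 with h1 | h1
  · exact ⟨h0, h1⟩
  · exact ⟨h0, by simpa [h0, hβ] using h1⟩
  · exact ⟨by simpa [h1, hα] using h0, h1⟩
  · refine ⟨(mul_eq_zero.1 (?_ : 3 * C α * _ = 0)).resolve_left (mul_ne_zero (by norm_num) hα'),
      (mul_eq_zero.1 (?_ : 3 * C β * _ = 0)).resolve_left (mul_ne_zero (by norm_num) hβ')⟩
    · linear_combination 2 * h1 - h0
    · linear_combination 2 * h0 - h1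

lemma restrict_pderiv_restrict_apply_eq_zero [CharZero k] {α β : k} (hαβ : α ≠ 0 ∨ β ≠ 0)
    {e : MvPolynomial (Fin 3) k →ₐ[k] MvPolynomial (Fin 3) k}
    (h0 : IsMirror (X 0 * (X 1 * (C α * X 0 + C β * X 1))) e (X 0))
    (h1 : IsMirror (X 0 * (X 1 * (C α * X 0 + C β * X 1))) e (X 1)) :
    α ≠ 0 ∧ β ≠ 0 ∧ ∀ f, restrict k 1 (restrict k 2 (e f)) = 0 →
      restrict k 1 (pderiv 0 (restrict k 2 (e f))) = 0 := by
  have hswap : (X 0 * (X 1 * (C α * X 0 + C β * X 1)) : MvPolynomial (Fin 3) k) =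
    X 1 * (X 0 * (C β * X 1 + C α * X 0)) := by ring
  obtain ⟨φ, ξ, hφ, hφe, hφΩ⟩ := h0
  obtain ⟨φ', ξ', hφ', hφe', hφΩ'⟩ := hswap ▸ h1
  have hα : α ≠ 0 := hαβ.elim id fun hβ =>
    let ⟨_, _, _, h⟩ := hφ'.exists_apply_X_eq_of_apply_eq (by decide) hβ hφΩ'
    left_ne_zero_of_mul (h ▸ hβ)
  obtain ⟨d, hd, rfl, hβd⟩ := hφ.exists_apply_X_eq_of_apply_eq (by decide) hα hφΩ
  have hβ : β ≠ 0 := left_ne_zero_of_mul (hβd ▸ hα)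
  obtain ⟨d', hd', rfl, hαd'⟩ := hφ'.exists_apply_X_eq_of_apply_eq (by decide) hβ hφΩ'
  have hdd' : d * d' = 1 := mul_left_cancel₀ hβ (by linear_combination d' * hβd + hαd')
  exact ⟨hα, hβ, fun f =>
    hφ.restrict_pderiv_restrict_eq_zero hdd' hd hφ' hd' (hφe f) (hφe' f)⟩

theorem not_isMirror_of_potential_eq_X_mul_X_mul_add [CharZero k] {α β : k} (hαβ : α ≠ 0 ∨ β ≠ 0)
    {e : MvPolynomial (Fin 3) k →ₐ[k] MvPolynomial (Fin 3) k}
    (he : IsPoissonEnd (X 0 * (X 1 * (C α * X 0 + C β * X 1))) e) (hint : e.toRingHom.IsIntegral)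
    (h0 : IsMirror (X 0 * (X 1 * (C α * X 0 + C β * X 1))) e (X 0)) :
    ¬ IsMirror (X 0 * (X 1 * (C α * X 0 + C β * X 1))) e (X 1) := by
  intro h1
  obtain ⟨hα, hβ, hdy⟩ := restrict_pderiv_restrict_apply_eq_zero hαβ h0 h1
  obtain ⟨hy0, hy1⟩ := he.restrict_restrict_eq_zero hα hβ
  have hint2 : ((restrict k 2).comp e).toRingHom.IsIntegral :=
    RingHom.IsIntegral.trans _ _ hint isIntegral_restrict
  have hz : pderiv 0 (restrict k 1 (restrict k 2 (e (X 2)))) ≠ 0 := by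
    obtain ⟨i, hi⟩ := exists_pderiv_ne_zero_of_isIntegral
      (f := (restrict k 1).comp ((restrict k 2).comp e))
      (RingHom.IsIntegral.trans _ _ hint2 isIntegral_restrict)
    fin_cases i
    · simp [hy0] at hi
    · simp [hy1] at hi
    · exact hi
  have hzero : (fun i : Fin 2 => restrict k 2 (e (X i.castSucc))) = 0 :=
    eq_zero_of_X_sq_mul_planeJacobian_mem hz (he.X_sq_mul_planeJacobian_mem hβ)
      (Fin.forall_fin_two.2 ⟨hy0, hy1⟩) (Fin.forall_fin_two.2 ⟨hdy _ hy0, hdy _ hy1⟩)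
  obtain ⟨i, j, hij⟩ := exists_planeJacobian_ne_zero_of_isIntegral hint2
  refine hij ?_
  have h0 : restrict k 2 (e (X 0)) = 0 := congrFun hzero 0
  have h1 : restrict k 2 (e (X 1)) = 0 := congrFun hzero 1
  fin_cases i <;> fin_cases j <;> simp [h0, h1]

end ConcurrentPlanes

section Arrangements

variable {k : Type*} [Field k] [CharZero k]
  {e : MvPolynomial (Fin 3) k →ₐ[k] MvPolynomial (Fin 3) k} {a b c : MvPolynomial (Fin 3) k}

lemma not_isMirror_of_linearIndependent_pair (hab : LinearIndependent k ![a, b])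
    (he : IsPoissonEnd (a * (b * c)) e) (hint : e.toRingHom.IsIntegral)
    (ha : IsMirror (a * (b * c)) e a) (hb : IsMirror (a * (b * c)) e b) :
    ¬ IsMirror (a * (b * c)) e c := by
  intro hc
  by_cases habc : LinearIndependent k ![a, b, c]
  · obtain ⟨ψ, hψ, hψh⟩ := exists_algEquiv_apply_X_eq (l := ![a, b, c])
      (by simp [Fin.forall_fin_succ, ha.isHomogeneous, hb.isHomogeneous, hc.isHomogeneous]) habc
    obtain ⟨rfl, rfl, rfl⟩ : ψ (X 0) = a ∧ ψ (X 1) = b ∧ ψ (X 2) = c := ⟨hψ 0, hψ 1, hψ 2⟩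
    rw [← map_mul, ← map_mul] at he hc
    exact not_isMirror_of_potential_eq_X_mul_X_mul_X he.conjugate (isIntegral_conjugate hint)
      (hc.conjugate hψh)
  · obtain ⟨α, β, rfl⟩ : ∃ α β : k, α • a + β • b = c := by
      rw [← Submodule.mem_span_pair, ← Matrix.range_cons_cons_empty _ _ ![]]
      by_contra hmem
      exact habc (by simpa using linearIndependent_finSnoc.2 ⟨hab, hmem⟩)
    have hαβ : α ≠ 0 ∨ β ≠ 0 := by
      by_contra! h
      exact hc.ne_zero (by rw [h.1, h.2, zero_smul, zero_smul, add_zero])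
    obtain ⟨ψ, hψ, hψh⟩ := exists_algEquiv_apply_X_castLE_eq (n := 3) (by decide) (l := ![a, b])
      (by simp [Fin.forall_fin_succ, ha.isHomogeneous, hb.isHomogeneous]) hab
    obtain ⟨rfl, rfl⟩ : ψ (X 0) = a ∧ ψ (X 1) = b := ⟨hψ 0, hψ 1⟩
    have hC (s : k) : ψ (C s) = C s := ψ.commutes s
    have hΩ : ψ (X 0) * (ψ (X 1) * (α • ψ (X 0) + β • ψ (X 1))) =
        ψ (X 0 * (X 1 * (C α * X 0 + C β * X 1))) := by
      simp only [map_mul, map_add, hC, smul_eq_C_mul]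
    rw [hΩ] at he ha hb
    exact not_isMirror_of_potential_eq_X_mul_X_mul_add hαβ he.conjugate (isIntegral_conjugate hint)
      (ha.conjugate hψh) (hb.conjugate hψh)

theorem not_isMirror_of_isMirror_of_isMirror (he : IsPoissonEnd (a * (b * c)) e)
    (hint : e.toRingHom.IsIntegral)
    (ha : IsMirror (a * (b * c)) e a) (hb : IsMirror (a * (b * c)) e b) :
    ¬ IsMirror (a * (b * c)) e c := by
  intro hc
  by_cases hab : LinearIndependent k ![a, b]
  · exact not_isMirror_of_linearIndependent_pair hab he hint ha hb hc
  by_cases hac : LinearIndependent k ![a, c]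
  · rw [mul_comm b c] at he ha hb hc
    exact not_isMirror_of_linearIndependent_pair hac he hint ha hc hb
  rw [LinearIndependent.pair_iff' ha.ne_zero] at hab hac
  push Not at hab hac
  obtain ⟨s, rfl⟩ := hab
  obtain ⟨t, rfl⟩ := hac
  have hst : s * t ≠ 0 := mul_ne_zero
    (fun h => hb.ne_zero (by rw [h, zero_smul])) (fun h => hc.ne_zero (by rw [h, zero_smul]))
  obtain ⟨ψ, hψ, hψh⟩ := exists_algEquiv_apply_X_castLE_eq (n := 3) (by decide) (l := ![a])
      (by simp [ha.isHomogeneous]) (by simpa using ha.ne_zero)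
  obtain rfl : ψ (X 0) = a := hψ 0
  have hC : ψ (C (s * t)) = C (s * t) := ψ.commutes _
  have hΩ : ψ (X 0) * (s • ψ (X 0) * (t • ψ (X 0))) = ψ (X 0 * (C (s * t) * X 0 ^ 2)) := by
    rw [map_mul, map_mul, hC, map_pow, smul_eq_C_mul, smul_eq_C_mul, C_mul]
    ring
  rw [hΩ] at he ha
  exact not_isMirror_of_potential_eq_cube hst he.conjugate (isIntegral_conjugate hint)
    (ha.conjugate hψh)

end Arrangements

section Invariants

variable {k : Type*} [Field k] [CharZero k] {Ω : MvPolynomial (Fin 3) k}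
  {G : Subgroup (MvPolynomial (Fin 3) k ≃ₐ[k] MvPolynomial (Fin 3) k)}
  {e : MvPolynomial (Fin 3) k →ₐ[k] MvPolynomial (Fin 3) k}

lemma isMirror_of_prime_of_dvd [Finite G] (hΩ : Ω ≠ 0) (hhom : Ω.IsHomogeneous 3)
    (hG : ∀ φ ∈ G, IsGradedPoissonAut (jacobianBracket Ω) φ)
    (hrange : Set.range e = {f | ∀ φ ∈ G, φ f = f}) (he : IsPoissonEnd Ω e)
    (hJ : constantCoeff (jacobianDet e) = 0) {q : MvPolynomial (Fin 3) k} (hq : Prime q)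
    (hqΩ : q ∣ Ω) : IsMirror Ω e q := by
  have hqJ : q ∣ jacobianDet e :=
    prime_dvd_of_pderiv_eq_mul hhom hΩ (pderiv_apply_eq_jacobianDet_mul he) hJ hq hqΩ
  obtain ⟨φ, hφ, ξ, hξ⟩ :=
    exists_isReflection_of_dvd_jacobianDet (fun φ hφ => (hG φ hφ).1) hrange.ge hq hqJ
  exact ⟨φ, ξ, hξ, fun f => hrange.le ⟨f, rfl⟩ φ hφ,
    hξ.apply_potential_eq (hG φ hφ).1 (hG φ hφ).2 hhom⟩

theorem constantCoeff_jacobianDet_ne_zero [Finite G] (hΩ : Ω ≠ 0) (hhom : Ω.IsHomogeneous 3)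
    (hG : ∀ φ ∈ G, IsGradedPoissonAut (jacobianBracket Ω) φ)
    (hrange : Set.range e = {f | ∀ φ ∈ G, φ f = f}) (he : IsPoissonEnd Ω e) :
    constantCoeff (jacobianDet e) ≠ 0 := by
  intro hJ
  have hmirror {q} (hq : Prime q) (hqΩ : q ∣ Ω) : IsMirror Ω e q :=
    isMirror_of_prime_of_dvd hΩ hhom hG hrange he hJ hq hqΩ
  obtain ⟨a, b, c, ha, hb, hc, rfl⟩ :=
    exists_prime_mul_mul_eq hhom hΩ fun q hq hqΩ => (hmirror hq hqΩ).isHomogeneous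
  exact not_isMirror_of_isMirror_of_isMirror he (isIntegral_of_invariants_subset_range G hrange.ge)
    (hmirror ha (dvd_mul_right a _)) (hmirror hb ((dvd_mul_right b c).mul_left a))
    (hmirror hc ((dvd_mul_left c b).mul_left a))

end Invariants

theorem stmt_0_general {k : Type*} [Field k] [CharZero k]
    (Ω : MvPolynomial (Fin 3) k) (hΩ : Ω ≠ 0) (hhom : Ω.IsHomogeneous 3)
    (G : Subgroup (MvPolynomial (Fin 3) k ≃ₐ[k] MvPolynomial (Fin 3) k))
    (hG : ∀ φ ∈ G, IsGradedPoissonAut (jacBracket (pderiv 2 Ω) (pderiv 0 Ω) (pderiv 1 Ω)) φ)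
    (hfin : Finite G) :
    InvariantsPoissonIso (jacBracket (pderiv 2 Ω) (pderiv 0 Ω) (pderiv 1 Ω)) G ↔ G = ⊥ := by
  constructor
  · rintro ⟨e, -, hrange, he⟩
    have hJ : constantCoeff (jacobianDet e) ≠ 0 :=
      constantCoeff_jacobianDet_ne_zero hΩ hhom hG hrange he
    refine (Subgroup.eq_bot_iff_forall G).2 fun φ hφ => AlgEquiv.ext fun f => ?_
    have hid := algHom_eq_id_of_constantCoeff_jacobianDet_ne_zero hJ
      (φ := (φ : MvPolynomial (Fin 3) k →ₐ[k] MvPolynomial (Fin 3) k)) (hG φ hφ).1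
      fun f => hrange.le ⟨f, rfl⟩ φ hφ
    exact DFunLike.congr_fun hid f
  · rintro rfl
    exact ⟨AlgHom.id k _, Function.injective_id, by simp, fun _ _ => rfl⟩

/-- Shephard-Todd-Chevalley for unimodular quadratic Poisson structures on `k[x₁,x₂,x₃]`:
with the Jacobian bracket of a nonzero cubic `Ω`, the invariant subalgebra `P^G` is
isomorphic to `P` as a Poisson algebra iff `G` is trivial. -/
theorem stmt_0 {k : Type*} [Field k] [IsAlgClosed k] [CharZero k]
    (Ω : MvPolynomial (Fin 3) k) (hΩ : Ω ≠ 0) (hhom : Ω.IsHomogeneous 3)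
    (G : Subgroup (MvPolynomial (Fin 3) k ≃ₐ[k] MvPolynomial (Fin 3) k))
    (hG : ∀ φ ∈ G, IsGradedPoissonAut (jacBracket (pderiv 2 Ω) (pderiv 0 Ω) (pderiv 1 Ω)) φ)
    (hfin : Finite G) :
    InvariantsPoissonIso (jacBracket (pderiv 2 Ω) (pderiv 0 Ω) (pderiv 1 Ω)) G ↔ G = ⊥ :=
  stmt_0_general Ω hΩ hhom G hG hfin
end

section
/- Equip P = k[x₁,x₂,x₃] with the Poisson bracket {x₁,x₂} = 0, {x₂,x₃} = 2x₁x₂ + x₂², {x₃,x₁} = x₁² + 2x₁x₂. If G is a nontrivial finite subgroup of the graded Poisson automorphism group of P generated by Poisson reflections, then the invariant subalgebra P^G is not isomorphic to P as a Poisson algebra. -/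
open MvPolynomial

/-!
The bracket is the Jacobian bracket of `Ω = x₀x₁(x₀ + x₁)`. A Poisson reflection permutes the three
lines `Ω = 0`, so on `x₀, x₁` it is one of the three reflections of the root system `A₂`, and it
sends `x₂` to `x₂` plus a combination of `x₀, x₁`.

All brackets of `P` lie in the square of the ideal `(x₀, x₁)`, and they generate an ideal with
radical `(x₀, x₁)`. So if `e : P ≅ P^G` preserves brackets, then `e x₀` and `e x₁` vanish on the
`x₂`-axis, and each bracket of two invariants is a combination of the products of `e x₀` and `e x₁`.
The linear part of an invariant that vanishes on the axis kills the coroot of every reflection in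
`G`. Hence on a line spanned by a combination of these coroots every bracket of invariants vanishes
to order at least `4`. However, an averaged copy of `x₂` and a suitable invariant `b` of degree `1`
(when all reflections have the same coroot) or `2` have a bracket of order `2` or `3` there.
-/

namespace CubicPoisson

section LineRestriction

variable {σ R : Type*} [CommSemiring R]

/-- Restriction of a polynomial to the line spanned by `v`, i.e. `f ↦ f(tv)`. It is used to measure
orders of vanishing at the origin. -/
noncomputable def lineRestrict (v : σ → R) : MvPolynomial σ R →ₐ[R] Polynomial R :=
  aeval fun i => Polynomial.C (v i) * Polynomial.X

/-- The differential at the origin of a polynomial, as a linear form on the affine space. -/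
noncomputable def differentialAtZero [Fintype σ] (f : MvPolynomial σ R) : (σ → R) →ₗ[R] R :=
  ∑ i, constantCoeff (pderiv i f) • LinearMap.proj i

theorem differentialAtZero_apply [Fintype σ] (f : MvPolynomial σ R) (v : σ → R) :
    differentialAtZero f v = ∑ i, constantCoeff (pderiv i f) * v i := by
  simp [differentialAtZero]

@[simp]
theorem lineRestrict_X (v : σ → R) (i : σ) :
    lineRestrict v (X i) = Polynomial.C (v i) * Polynomial.X :=
  aeval_X _ i

@[simp]
theorem coeff_zero_lineRestrict (v : σ → R) (f : MvPolynomial σ R) :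
    (lineRestrict v f).coeff 0 = constantCoeff f := by
  induction f using MvPolynomial.induction_on with
  | C c => simp
  | add p q hp hq => simp [hp, hq]
  | mul_X p i _ => simp [Polynomial.mul_coeff_zero]

@[simp]
theorem coeff_one_lineRestrict [Fintype σ] (v : σ → R) (f : MvPolynomial σ R) :
    (lineRestrict v f).coeff 1 = differentialAtZero f v := by
  classical
  rw [differentialAtZero_apply]
  induction f using MvPolynomial.induction_on with
  | C c => simp
  | add p q hp hq => simp [hp, hq, add_mul, Finset.sum_add_distrib]
  | mul_X p i _ =>
    simp [Polynomial.mul_coeff_one, Derivation.leibniz, pderiv_X, Pi.single_apply, apply_ite]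

theorem lineRestrict_map_eq {F : Type*} [FunLike F (MvPolynomial σ R) (MvPolynomial σ R)]
    [AlgHomClass F R (MvPolynomial σ R) (MvPolynomial σ R)] {φ : F} {v w : σ → R}
    (h : ∀ i, lineRestrict v (φ (X i)) = lineRestrict w (X i)) (f : MvPolynomial σ R) :
    lineRestrict v (φ f) = lineRestrict w f :=
  DFunLike.congr_fun
    (MvPolynomial.algHom_ext (f := (lineRestrict v).comp (AlgHomClass.toAlgHom φ)) h) f

theorem X_sq_dvd_lineRestrict_iff {R : Type*} [CommRing R] [Fintype σ] {v : σ → R}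
    {f : MvPolynomial σ R} :
    Polynomial.X ^ 2 ∣ lineRestrict v f ↔ constantCoeff f = 0 ∧ differentialAtZero f v = 0 := by
  rw [Polynomial.X_pow_dvd_iff, ← coeff_zero_lineRestrict v, ← coeff_one_lineRestrict]
  refine ⟨fun h => ⟨h 0 two_pos, h 1 one_lt_two⟩, fun ⟨h0, h1⟩ d hd => ?_⟩
  interval_cases d <;> assumption

end LineRestriction

section GroupActions

theorem exists_smul_invariant_map_eq_card_nsmul {G A B : Type*} [Group G] [Finite G]
    [AddCommMonoid A] [DistribMulAction G A] [AddCommMonoid B] (ρ : A →+ B) (a : A)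
    (hρ : ∀ g : G, ρ (g • a) = ρ a) :
    ∃ b : A, (∀ g : G, g • b = b) ∧ ρ b = Nat.card G • ρ a := by
  have := Fintype.ofFinite G
  refine ⟨∑ g : G, g • a, fun g => ?_, ?_⟩
  · simp only [Finset.smul_sum, smul_smul]
    exact Fintype.sum_equiv (Equiv.mulLeft g) _ _ fun _ => rfl
  · simp [map_sum, hρ]

end GroupActions

section Bracket

variable {k : Type*} [Field k]

/-- The Poisson bracket of the theorem, the Jacobian bracket of `Ω = x₀x₁(x₀ + x₁)`: the values
`{x₁,x₂}` and `{x₂,x₀}` are `∂Ω/∂x₀` and `∂Ω/∂x₁`. -/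
noncomputable def cubicBracket :
    MvPolynomial (Fin 3) k → MvPolynomial (Fin 3) k → MvPolynomial (Fin 3) k :=
  jacBracket 0 (2 * X 0 * X 1 + X 1 ^ 2) (X 0 ^ 2 + 2 * X 0 * X 1)

theorem cubicBracket_X_one_X_two :
    cubicBracket (X 1 : MvPolynomial (Fin 3) k) (X 2) = 2 * X 0 * X 1 + X 1 ^ 2 := by
  simp [cubicBracket, jacBracket, pderiv_X]

theorem cubicBracket_X_zero_X_two :
    cubicBracket (X 0 : MvPolynomial (Fin 3) k) (X 2) = -(X 0 ^ 2 + 2 * X 0 * X 1) := by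
  simp [cubicBracket, jacBracket, pderiv_X]

theorem cubicBracket_X_two (b : MvPolynomial (Fin 3) k) :
    cubicBracket (X 2) b =
      pderiv 0 b * (X 0 ^ 2 + 2 * X 0 * X 1) - pderiv 1 b * (2 * X 0 * X 1 + X 1 ^ 2) := by
  simp [cubicBracket, jacBracket, pderiv_X]
  ring

theorem cubicBracket_of_pderiv_two_eq_zero (a : MvPolynomial (Fin 3) k)
    {b : MvPolynomial (Fin 3) k} (hb : pderiv 2 b = 0) :
    cubicBracket a b = pderiv 2 a * cubicBracket (X 2) b := by
  rw [cubicBracket_X_two]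
  simp only [cubicBracket, jacBracket, hb]
  ring

theorem map_cubicBracket_mem_sq {A : Type*} [CommRing A] [Algebra k A]
    (ρ : MvPolynomial (Fin 3) k →ₐ[k] A) {I : Ideal A} (h0 : ρ (X 0) ∈ I) (h1 : ρ (X 1) ∈ I)
    (f g : MvPolynomial (Fin 3) k) : ρ (cubicBracket f g) ∈ I ^ 2 := by
  have h00 : ρ (X 0) ^ 2 ∈ I ^ 2 := Ideal.pow_mem_pow h0 2
  have h11 : ρ (X 1) ^ 2 ∈ I ^ 2 := Ideal.pow_mem_pow h1 2
  have h01 : 2 * ρ (X 0) * ρ (X 1) ∈ I ^ 2 := by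
    rw [mul_assoc, sq]
    exact Ideal.mul_mem_left _ _ (Ideal.mul_mem_mul h0 h1)
  simp only [cubicBracket, jacBracket, map_add, map_mul, map_pow, map_ofNat, mul_zero, zero_add]
  exact add_mem (Ideal.mul_mem_left _ _ (add_mem h01 h11))
    (Ideal.mul_mem_left _ _ (add_mem h00 h01))

theorem map_X_eq_zero_of_map_cubicBracket_eq_zero {A : Type*} [CommRing A] [IsDomain A]
    [CharZero A] [Algebra k A] {ρ : MvPolynomial (Fin 3) k →ₐ[k] A}
    (h : ∀ f g, ρ (cubicBracket f g) = 0) : ρ (X 0) = 0 ∧ ρ (X 1) = 0 := by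
  have h12 := h (X 1) (X 2)
  have h02 := h (X 0) (X 2)
  rw [cubicBracket_X_one_X_two] at h12
  rw [cubicBracket_X_zero_X_two, map_neg, neg_eq_zero] at h02
  simp only [map_add, map_mul, map_pow, map_ofNat] at h12 h02
  have h1 : ρ (X 1) = 0 := pow_eq_zero_iff three_ne_zero |>.mp (by grind)
  exact ⟨by simpa [h1] using h02, h1⟩

/-- A direction vector of the `x₂`-axis, the locus where all brackets vanish. -/
def axis : Fin 3 → k := Pi.single 2 1

variable {e : MvPolynomial (Fin 3) k →ₐ[k] MvPolynomial (Fin 3) k}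

theorem lineRestrict_axis_cubicBracket (f g : MvPolynomial (Fin 3) k) :
    lineRestrict axis (cubicBracket f g) = 0 := by
  simpa using map_cubicBracket_mem_sq (lineRestrict axis) (I := ⊥)
    (by simp [axis]) (by simp [axis]) f g

theorem lineRestrict_axis_map_X [CharZero k]
    (he : ∀ f g, e (cubicBracket f g) = cubicBracket (e f) (e g)) :
    lineRestrict axis (e (X 0)) = 0 ∧ lineRestrict axis (e (X 1)) = 0 := by
  have h (f g) : (lineRestrict axis).comp e (cubicBracket f g) = 0 := by
    rw [AlgHom.comp_apply, he, lineRestrict_axis_cubicBracket]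
  exact map_X_eq_zero_of_map_cubicBracket_eq_zero h

theorem X_pow_four_dvd_lineRestrict_cubicBracket [CharZero k]
    (he : ∀ f g, e (cubicBracket f g) = cubicBracket (e f) (e g)) {v : Fin 3 → k}
    (h0 : differentialAtZero (e (X 0)) v = 0) (h1 : differentialAtZero (e (X 1)) v = 0)
    (f g : MvPolynomial (Fin 3) k) :
    Polynomial.X ^ 4 ∣ lineRestrict v (cubicBracket (e f) (e g)) := by
  have hconst {p : MvPolynomial (Fin 3) k} (hp : lineRestrict axis p = 0) :
      constantCoeff p = 0 := by
    rw [← coeff_zero_lineRestrict axis, hp, Polynomial.coeff_zero]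
  obtain ⟨haxis0, haxis1⟩ := lineRestrict_axis_map_X he
  have hmem0 : (lineRestrict v).comp e (X 0) ∈ Ideal.span {Polynomial.X ^ 2} := by
    rw [AlgHom.comp_apply, Ideal.mem_span_singleton, X_sq_dvd_lineRestrict_iff]
    exact ⟨hconst haxis0, h0⟩
  have hmem1 : (lineRestrict v).comp e (X 1) ∈ Ideal.span {Polynomial.X ^ 2} := by
    rw [AlgHom.comp_apply, Ideal.mem_span_singleton, X_sq_dvd_lineRestrict_iff]
    exact ⟨hconst haxis1, h1⟩
  have hmem := map_cubicBracket_mem_sq _ hmem0 hmem1 f g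
  rwa [Ideal.span_singleton_pow, Ideal.mem_span_singleton, ← pow_mul, AlgHom.comp_apply, he]
    at hmem

theorem differentialAtZero_axis (f : MvPolynomial (Fin 3) k) :
    differentialAtZero f axis = constantCoeff (pderiv 2 f) := by
  simp [differentialAtZero_apply, Fin.sum_univ_three, axis]

theorem X_pow_four_dvd_lineRestrict_cubicBracket_X_two [CharZero k]
    (he : ∀ f g, e (cubicBracket f g) = cubicBracket (e f) (e g)) {v : Fin 3 → k}
    (h0 : differentialAtZero (e (X 0)) v = 0) (h1 : differentialAtZero (e (X 1)) v = 0)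
    {a b : MvPolynomial (Fin 3) k} (ha : a ∈ Set.range e) (hb : b ∈ Set.range e)
    (ha2 : differentialAtZero a axis ≠ 0) (hb2 : pderiv 2 b = 0) :
    Polynomial.X ^ 4 ∣ lineRestrict v (cubicBracket (X 2) b) := by
  obtain ⟨f, rfl⟩ := ha
  obtain ⟨g, rfl⟩ := hb
  have hdvd := X_pow_four_dvd_lineRestrict_cubicBracket he h0 h1 f g
  rw [cubicBracket_of_pderiv_two_eq_zero _ hb2, map_mul] at hdvd
  refine Polynomial.prime_X.pow_dvd_of_dvd_mul_left 4 ?_ hdvd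
  rwa [Polynomial.X_dvd_iff, coeff_zero_lineRestrict, ← differentialAtZero_axis]

end Bracket

section Reflections

variable {k : Type*} [Field k]

/-- The coroots of the positive roots `rootForm i` of `A₂`, with third coordinate `0`. Roots and
coroots together describe the reflections of the `x₀x₁`-plane permuting the lines `Ω = 0`. -/
def coroot : Fin 3 → Fin 3 → k :=
  ![![2, -1, 0], ![-1, 2, 0], ![1, 1, 0]]

/-- The linear factors `x₀`, `x₁`, `x₀ + x₁` of `Ω`, which are the positive roots of `A₂`. -/
noncomputable def rootForm : Fin 3 → MvPolynomial (Fin 3) k :=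
  ![X 0, X 1, X 0 + X 1]

/-- The endomorphism `φ` acts on `x₀` and `x₁` as the reflection in the root `rootForm i`, and fixes
`x₂` modulo `x₀` and `x₁`. All Poisson reflections have this form. -/
structure IsRootReflection (i : Fin 3) (φ : MvPolynomial (Fin 3) k → MvPolynomial (Fin 3) k) :
    Prop where
  map_X_zero : φ (X 0) = X 0 - C (coroot i 0) * rootForm i
  map_X_one : φ (X 1) = X 1 - C (coroot i 1) * rootForm i
  map_X_two : ∃ r s : k, φ (X 2) = C r * X 0 + C s * X 1 + X 2

theorem coroot_apply_two (i : Fin 3) : (coroot i 2 : k) = 0 := by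
  fin_cases i <;> rfl

theorem lineRestrict_coroot_rootForm (i : Fin 3) :
    lineRestrict (coroot i) (rootForm i : MvPolynomial (Fin 3) k) = 2 * Polynomial.X := by
  fin_cases i
  · simp [coroot, rootForm, map_ofNat]
  · simp [coroot, rootForm, map_ofNat]
  · simp [coroot, rootForm, two_mul]

theorem lineRestrict_axis_rootForm (i : Fin 3) :
    lineRestrict axis (rootForm i : MvPolynomial (Fin 3) k) = 0 := by
  fin_cases i <;> simp [axis, rootForm]

namespace IsRootReflection

variable {i : Fin 3} {φ : MvPolynomial (Fin 3) k ≃ₐ[k] MvPolynomial (Fin 3) k}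

theorem lineRestrict_axis (hφ : IsRootReflection i φ) (f : MvPolynomial (Fin 3) k) :
    lineRestrict axis (φ f) = lineRestrict axis f := by
  obtain ⟨r, s, hrs⟩ := hφ.map_X_two
  refine lineRestrict_map_eq (fun j => ?_) f
  fin_cases j
  · simp [hφ.map_X_zero, lineRestrict_axis_rootForm]
  · simp [hφ.map_X_one, lineRestrict_axis_rootForm]
  · simp [hrs, axis]

theorem differentialAtZero_coroot [CharZero k] (hφ : IsRootReflection i φ)
    {f : MvPolynomial (Fin 3) k} (hf : φ f = f) (haxis : differentialAtZero f axis = 0) :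
    differentialAtZero f (coroot i) = 0 := by
  obtain ⟨r, s, hrs⟩ := hφ.map_X_two
  have hline : lineRestrict (coroot i) (φ f) =
      lineRestrict (-coroot i + (r * coroot i 0 + s * coroot i 1) • axis) f := by
    refine lineRestrict_map_eq (fun j => ?_) f
    match j with
    | 0 =>
      simp [hφ.map_X_zero, lineRestrict_coroot_rootForm, axis]
      ring
    | 1 =>
      simp [hφ.map_X_one, lineRestrict_coroot_rootForm, axis]
      ring
    | 2 => simp [hrs, coroot_apply_two, axis, add_mul, mul_assoc]
  have hneg : differentialAtZero f (coroot i) = -differentialAtZero f (coroot i) := by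
    simpa [hf, haxis] using congrArg (Polynomial.coeff · 1) hline
  exact self_eq_neg.mp hneg

end IsRootReflection

theorem apply_single_zero_eq_zero_of_apply_coroot [CharZero k] (L : (Fin 3 → k) →ₗ[k] k)
    {i j : Fin 3} (hij : i ≠ j) (hi : L (coroot i) = 0) (hj : L (coroot j) = 0) :
    L (Pi.single 0 1) = 0 := by
  have hL (l : Fin 3) : L (coroot l) =
      coroot l 0 * L (Pi.single 0 1) + coroot l 1 * L (Pi.single 1 1) := by
    have hcoroot : coroot l =
        (coroot l 0 : k) • (Pi.single 0 1 : Fin 3 → k) + (coroot l 1 : k) • Pi.single 1 1 := by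
      ext m
      fin_cases m <;> simp [coroot_apply_two]
    conv_lhs => rw [hcoroot]
    simp only [map_add, map_smul, smul_eq_mul]
  rw [hL] at hi hj
  fin_cases i <;> fin_cases j <;> simp_all [coroot] <;> grind

/-- A linear form spanning the linear forms in `x₀, x₁` fixed by the reflection in the `i`-th
root. -/
noncomputable def mirrorForm (i : Fin 3) : MvPolynomial (Fin 3) k :=
  C (coroot i 1) * X 0 - C (coroot i 0) * X 1

/-- The quadratic invariant of the Weyl group of `A₂`. -/
noncomputable def normForm : MvPolynomial (Fin 3) k :=
  X 0 ^ 2 + X 0 * X 1 + X 1 ^ 2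

namespace IsRootReflection

variable {i : Fin 3} {φ : MvPolynomial (Fin 3) k ≃ₐ[k] MvPolynomial (Fin 3) k}

theorem map_mirrorForm (hφ : IsRootReflection i φ) : φ (mirrorForm i) = mirrorForm i := by
  simp only [mirrorForm, map_sub, map_mul, ← MvPolynomial.algebraMap_eq, φ.commutes,
    hφ.map_X_zero, hφ.map_X_one]
  ring

theorem map_normForm (hφ : IsRootReflection i φ) : φ normForm = normForm := by
  simp only [normForm, map_add, map_mul, map_pow, hφ.map_X_zero, hφ.map_X_one]
  fin_cases i <;> simp [coroot, rootForm, map_ofNat] <;> ring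

end IsRootReflection

theorem lineRestrict_coroot_cubicBracket_mirrorForm (i : Fin 3) :
    lineRestrict (coroot i) (cubicBracket (X 2) (mirrorForm i : MvPolynomial (Fin 3) k)) =
      Polynomial.C (3 * coroot i 0 * coroot i 1 * (coroot i 0 + coroot i 1)) *
        Polynomial.X ^ 2 := by
  rw [cubicBracket_X_two]
  simp [mirrorForm, pderiv_X, map_ofNat]
  ring

theorem lineRestrict_single_zero_cubicBracket_normForm :
    lineRestrict (Pi.single 0 1) (cubicBracket (X 2) (normForm : MvPolynomial (Fin 3) k)) =
      Polynomial.C 2 * Polynomial.X ^ 3 := by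
  rw [cubicBracket_X_two]
  simp [normForm, pderiv_X, map_ofNat]
  ring

theorem not_X_pow_dvd_C_mul_X_pow {R : Type*} [Semiring R] {c : R} (hc : c ≠ 0) {m n : ℕ}
    (hmn : n < m) : ¬ Polynomial.X ^ m ∣ Polynomial.C c * Polynomial.X ^ n := by
  rw [Polynomial.X_pow_dvd_iff]
  intro h
  exact hc (by simpa using h n hmn)

end Reflections

section Classification

variable {k : Type*} [Field k]

theorem column_cases_of_quadratic [CharZero k] {α a c : k} (ha : a * (a + 2 * c) = α * a)
    (hc : c * (2 * a + c) = -(α * c)) :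
    a = 0 ∧ c = 0 ∨ a = α ∧ c = 0 ∨ a = 0 ∧ c = -α ∨ a = -α ∧ c = α := by
  grind

theorem reflection_matrix_cases [CharZero k] {α a b c d ξ : k} (hξ0 : ξ ≠ 0) (hξ1 : ξ ≠ 1)
    (ha : a * (a + 2 * c) = α * a) (hc : c * (2 * a + c) = -(α * c))
    (hb : b * (b + 2 * d) = -(α * b)) (hd : d * (2 * b + d) = α * d)
    (hchar : ∀ t, (t - α) * ((t - a) * (t - d) - b * c) = (t - 1) ^ 2 * (t - ξ)) :
    α = 1 ∧ (a = -1 ∧ b = 0 ∧ c = 1 ∧ d = 1 ∨ a = 1 ∧ b = 1 ∧ c = 0 ∧ d = -1 ∨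
      a = 0 ∧ b = -1 ∧ c = -1 ∧ d = 0) := by
  have hdet : α * (a * d - b * c) = ξ := by linear_combination -hchar 0
  have hminors : α * (a + d) + (a * d - b * c) = 1 + 2 * ξ := by
    linear_combination (hchar 1 - hchar (-1)) / 2
  have htrace : α + a + d = 2 + ξ := by
    linear_combination hchar 0 - (hchar 1 + hchar (-1)) / 2
  have hα : α ≠ 0 := by
    rintro rfl
    exact hξ0 (by rw [← hdet, zero_mul])
  have hcol0 := column_cases_of_quadratic ha hc
  have hcol1 : b = 0 ∧ d = 0 ∨ b = -α ∧ d = 0 ∨ b = 0 ∧ d = α ∨ b = α ∧ d = -α := by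
    simpa using column_cases_of_quadratic (α := -α) (a := b) (c := d) (by simpa using hb)
      (by simpa using hd)
  -- The invertible matrices left are `α` times the elements of the Weyl group of `A₂`. The
  -- rotations have eigenvalues `α, α` or `αω, αω²` for a primitive cube root of unity `ω`.
  rcases hcol0 with h | h | h | h <;> rcases hcol1 with h' | h' | h' | h' <;> grind

section GradedPoissonAut

variable {φ : MvPolynomial (Fin 3) k ≃ₐ[k] MvPolynomial (Fin 3) k} {M : Matrix (Fin 3) (Fin 3) k}

theorem matrix_apply_two_eq_zero [CharZero k]
    (hφ : ∀ f g, φ (cubicBracket f g) = cubicBracket (φ f) (φ g))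
    (hM : ∀ i, φ (X i) = ∑ j, C (M i j) * X j) : M 0 2 = 0 ∧ M 1 2 = 0 := by
  have h := lineRestrict_axis_map_X (e := (φ : _ →ₐ[k] _)) hφ
  simpa [hM, axis, Pi.single_apply, apply_ite] using h

theorem cubicBracket_linear_forms (a b r s α : k) :
    cubicBracket (C a * X 0 + C b * X 1) (C r * X 0 + C s * X 1 + C α * X 2) =
      C α * (C b * (2 * X 0 * X 1 + X 1 ^ 2) - C a * (X 0 ^ 2 + 2 * X 0 * X 1)) := by
  simp [cubicBracket, jacBracket, pderiv_X]
  ring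

theorem matrix_quadratic_relations [CharZero k]
    (hφ : ∀ f g, φ (cubicBracket f g) = cubicBracket (φ f) (φ g))
    (hM : ∀ i, φ (X i) = ∑ j, C (M i j) * X j) :
    (M 0 0 * (M 0 0 + 2 * M 1 0) = M 2 2 * M 0 0 ∧
      M 1 0 * (2 * M 0 0 + M 1 0) = -(M 2 2 * M 1 0)) ∧
    M 0 1 * (M 0 1 + 2 * M 1 1) = -(M 2 2 * M 0 1) ∧
      M 1 1 * (2 * M 0 1 + M 1 1) = M 2 2 * M 1 1 := by
  obtain ⟨h02, h12⟩ := matrix_apply_two_eq_zero hφ hM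
  have hφ12 := hφ (X 1) (X 2)
  have hφ02 := hφ (X 0) (X 2)
  rw [cubicBracket_X_one_X_two] at hφ12
  rw [cubicBracket_X_zero_X_two, map_neg, neg_eq_iff_eq_neg] at hφ02
  simp only [map_add, map_mul, map_pow, map_ofNat, hM, Fin.sum_univ_three, h02, h12,
    C_0, zero_mul, add_zero, cubicBracket_linear_forms] at hφ12 hφ02
  have h12e0 : 2 * M 0 0 * M 1 0 + M 1 0 ^ 2 = -(M 2 2 * M 1 0) := by
    simpa using congrArg (eval ![1, 0, 0]) hφ12
  have h12e1 : 2 * M 0 1 * M 1 1 + M 1 1 ^ 2 = M 2 2 * M 1 1 := by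
    simpa using congrArg (eval ![0, 1, 0]) hφ12
  have h02e0 : M 0 0 ^ 2 + 2 * M 0 0 * M 1 0 = M 2 2 * M 0 0 := by
    simpa using congrArg (eval ![1, 0, 0]) hφ02
  have h02e1 : M 0 1 ^ 2 + 2 * M 0 1 * M 1 1 = -(M 2 2 * M 0 1) := by
    simpa using congrArg (eval ![0, 1, 0]) hφ02
  refine ⟨⟨?_, ?_⟩, ?_, ?_⟩
  · linear_combination h02e0
  · linear_combination h12e0
  · linear_combination h02e1
  · linear_combination h12e1

theorem eval_charpoly_of_apply_two_eq_zero (h02 : M 0 2 = 0) (h12 : M 1 2 = 0) (t : k) :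
    M.charpoly.eval t =
      (t - M 2 2) * ((t - M 0 0) * (t - M 1 1) - M 0 1 * M 1 0) := by
  rw [Matrix.eval_charpoly, Matrix.det_fin_three]
  simp [h02, h12]
  ring

theorem exists_isRootReflection [CharZero k]
    (h : IsPoissonReflection cubicBracket φ) : ∃ i, IsRootReflection i φ := by
  obtain ⟨⟨-, hφ⟩, -, M, hM, ξ, hξ1, ⟨m, hm, hξm⟩, hchar⟩ := h
  have hξ0 : ξ ≠ 0 := by
    rintro rfl
    simp [hm.ne'] at hξm
  obtain ⟨h02, h12⟩ := matrix_apply_two_eq_zero hφ hM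
  obtain ⟨⟨h00, h10⟩, h01, h11⟩ := matrix_quadratic_relations hφ hM
  obtain ⟨h22, hcases⟩ := reflection_matrix_cases hξ0 hξ1 h00 h10 h01 h11 fun t => by
    simpa [hchar] using (eval_charpoly_of_apply_two_eq_zero h02 h12 t).symm
  have hX2 : ∃ r s : k, φ (X 2) = C r * X 0 + C s * X 1 + X 2 :=
    ⟨M 2 0, M 2 1, by simp [hM, Fin.sum_univ_three, h22]⟩
  have hX0 : φ (X 0) = C (M 0 0) * X 0 + C (M 0 1) * X 1 := by
    simp [hM, Fin.sum_univ_three, h02]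
  have hX1 : φ (X 1) = C (M 1 0) * X 0 + C (M 1 1) * X 1 := by
    simp [hM, Fin.sum_univ_three, h12]
  rcases hcases with h | h | h <;> simp only [h] at hX0 hX1
  · refine ⟨0, ?_, ?_, hX2⟩
    · simp [hX0, coroot, rootForm, map_ofNat]
      ring
    · simp [hX1, coroot, rootForm, add_comm]
  · refine ⟨1, ?_, ?_, hX2⟩
    · simp [hX0, coroot, rootForm]
    · simp [hX1, coroot, rootForm, map_ofNat]
      ring
  · exact ⟨2, by simp [hX0, coroot, rootForm], by simp [hX1, coroot, rootForm], hX2⟩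

end GradedPoissonAut

end Classification

section Invariants

variable {k : Type*} [Field k] {G : Subgroup (MvPolynomial (Fin 3) k ≃ₐ[k] MvPolynomial (Fin 3) k)}
  {S : Set (MvPolynomial (Fin 3) k ≃ₐ[k] MvPolynomial (Fin 3) k)}

theorem lineRestrict_axis_of_mem_closure (hS : ∀ φ ∈ S, ∃ i, IsRootReflection i φ)
    {φ : MvPolynomial (Fin 3) k ≃ₐ[k] MvPolynomial (Fin 3) k} (hφ : φ ∈ Subgroup.closure S)
    (f : MvPolynomial (Fin 3) k) : lineRestrict axis (φ f) = lineRestrict axis f := by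
  induction hφ using Subgroup.closure_induction generalizing f with
  | mem φ hφ => exact (hS φ hφ).elim fun _ hi => hi.lineRestrict_axis f
  | one => rfl
  | mul φ ψ _ _ hφ hψ => rw [AlgEquiv.mul_apply, hφ, hψ]
  | inv φ _ hφ => rw [← hφ, ← AlgEquiv.mul_apply, mul_inv_cancel, AlgEquiv.one_apply]

theorem exists_invariant_differentialAtZero_axis_ne_zero [CharZero k] [Finite G]
    (hG : ∀ φ ∈ G, ∀ f, lineRestrict axis (φ f) = lineRestrict axis f) :
    ∃ a, (∀ φ ∈ G, φ a = a) ∧ differentialAtZero a axis ≠ 0 := by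
  obtain ⟨a, haG, haxis⟩ := exists_smul_invariant_map_eq_card_nsmul (G := G)
    (lineRestrict (axis : Fin 3 → k)).toRingHom.toAddMonoidHom (X 2) fun φ => hG φ φ.2 _
  refine ⟨a, fun φ hφ => haG ⟨φ, hφ⟩, ?_⟩
  change lineRestrict axis a = Nat.card G • lineRestrict axis (X 2) at haxis
  rw [← coeff_one_lineRestrict, haxis]
  simp [axis, Nat.card_pos.ne']

theorem exists_invariant_not_X_pow_four_dvd_lineRestrict_cubicBracket [CharZero k]
    (hne : S.Nonempty) (hS : ∀ φ ∈ S, ∃ i, IsRootReflection i φ) :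
    ∃ v : Fin 3 → k, ∃ b, (∀ φ ∈ S, φ b = b) ∧ pderiv 2 b = 0 ∧
      ¬ Polynomial.X ^ 4 ∣ lineRestrict v (cubicBracket (X 2) b) ∧
      ∀ f, (∀ φ ∈ S, φ f = f) → differentialAtZero f axis = 0 → differentialAtZero f v = 0 := by
  obtain ⟨φ, hφ⟩ := hne
  obtain ⟨i, hi⟩ := hS φ hφ
  by_cases hsame : ∀ ψ ∈ S, IsRootReflection i ψ
  · refine ⟨coroot i, mirrorForm i, fun ψ hψ => (hsame ψ hψ).map_mirrorForm, ?_, ?_,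
      fun f hf => hi.differentialAtZero_coroot (hf φ hφ)⟩
    · simp [mirrorForm, pderiv_X]
    · rw [lineRestrict_coroot_cubicBracket_mirrorForm]
      refine not_X_pow_dvd_C_mul_X_pow ?_ (by norm_num)
      fin_cases i <;> norm_num [coroot]
  · push Not at hsame
    obtain ⟨ψ, hψ, hiψ⟩ := hsame
    obtain ⟨j, hj⟩ := hS ψ hψ
    have hij : i ≠ j := fun h => hiψ (h ▸ hj)
    refine ⟨Pi.single 0 1, normForm, fun χ hχ => (hS χ hχ).elim fun _ h => h.map_normForm, ?_, ?_,
      fun f hf haxis => apply_single_zero_eq_zero_of_apply_coroot _ hij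
        (hi.differentialAtZero_coroot (hf φ hφ) haxis)
        (hj.differentialAtZero_coroot (hf ψ hψ) haxis)⟩
    · simp [normForm, pderiv_X]
    · rw [lineRestrict_single_zero_cubicBracket_normForm]
      exact not_X_pow_dvd_C_mul_X_pow two_ne_zero (by norm_num)

end Invariants

end CubicPoisson

open CubicPoisson in
theorem stmt_13_general {k : Type*} [Field k] [CharZero k]
    (G : Subgroup (MvPolynomial (Fin 3) k ≃ₐ[k] MvPolynomial (Fin 3) k))
    (hfin : Finite G) (hnt : G ≠ ⊥)
    (hgen : ∃ S : Set (MvPolynomial (Fin 3) k ≃ₐ[k] MvPolynomial (Fin 3) k),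
      (∀ φ ∈ S, IsPoissonReflection
        (jacBracket 0 (2 * X 0 * X 1 + X 1 ^ 2) (X 0 ^ 2 + 2 * X 0 * X 1)) φ) ∧
      Subgroup.closure S = G) :
    ¬ InvariantsPoissonIso
      (jacBracket 0 (2 * X 0 * X 1 + X 1 ^ 2) (X 0 ^ 2 + 2 * X 0 * X 1)) G := by
  rintro ⟨e, -, hrange, he⟩
  obtain ⟨S, hS, rfl⟩ := hgen
  have hroot φ (hφ : φ ∈ S) : ∃ i, IsRootReflection i φ :=
    exists_isRootReflection (hS φ hφ)
  have hne : S.Nonempty := by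
    by_contra! hempty
    exact hnt (by rw [hempty, Subgroup.closure_empty])
  obtain ⟨a, ha, haxis⟩ := exists_invariant_differentialAtZero_axis_ne_zero
    fun φ hφ => lineRestrict_axis_of_mem_closure hroot hφ
  obtain ⟨v, b, hbS, hb2, hndvd, hv⟩ :=
    exists_invariant_not_X_pow_four_dvd_lineRestrict_cubicBracket hne hroot
  have hb : ∀ φ ∈ Subgroup.closure S, φ b = b :=
    (Subgroup.closure_le (MulAction.stabilizer _ b)).mpr hbS
  have hinv f φ (hφ : φ ∈ S) : φ (e f) = e f :=
    hrange.subset (Set.mem_range_self f) φ (Subgroup.subset_closure hφ)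
  obtain ⟨h0, h1⟩ := lineRestrict_axis_map_X he
  refine hndvd (X_pow_four_dvd_lineRestrict_cubicBracket_X_two he
    (hv _ (hinv _) ?_) (hv _ (hinv _) ?_) (hrange ▸ ha) (hrange ▸ hb) haxis hb2)
  · rw [← coeff_one_lineRestrict, h0, Polynomial.coeff_zero]
  · rw [← coeff_one_lineRestrict, h1, Polynomial.coeff_zero]

/-- With this bracket, if `G` is a nontrivial finite subgroup of graded Poisson
automorphisms generated by Poisson reflections, then `P^G` is not isomorphic to `P`
as a Poisson algebra. -/
theorem stmt_13 {k : Type*} [Field k] [IsAlgClosed k] [CharZero k]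
    (G : Subgroup (MvPolynomial (Fin 3) k ≃ₐ[k] MvPolynomial (Fin 3) k))
    (hG : ∀ φ ∈ G, IsGradedPoissonAut (jacBracket 0 (2 * X 0 * X 1 + X 1 ^ 2) (X 0 ^ 2 + 2 * X 0 * X 1)) φ)
    (hfin : Finite G) (hnt : G ≠ ⊥)
    (hgen : ∃ S : Set (MvPolynomial (Fin 3) k ≃ₐ[k] MvPolynomial (Fin 3) k),
      (∀ φ ∈ S, IsPoissonReflection (jacBracket 0 (2 * X 0 * X 1 + X 1 ^ 2) (X 0 ^ 2 + 2 * X 0 * X 1)) φ) ∧ Subgroup.closure S = G) :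
    ¬ InvariantsPoissonIso (jacBracket 0 (2 * X 0 * X 1 + X 1 ^ 2) (X 0 ^ 2 + 2 * X 0 * X 1)) G := by
  exact stmt_13_general G hfin hnt hgen
end
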